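/- For triangulations T₁ and T₂ of P(Q): T₁ is covered by T₂ in the triangulation order if and only if F(T₁) is covered by F(T₂) in the mar order, where F(T) = ⊕_{γ(a,b) ∈ T} M(a+1, b). Consequently, F is an isomorphism of posets from the type A Cambrian lattice on triangulations of P(Q) onto the poset of isomorphism classes of maximal almost rigid representations of Q generated by the mar covering relation. -/

import Mathlib

open scoped Classical

noncomputable section

namespace CambrianA

/-! ### Combinatorics of a type `A_{n+2}` quiver.

Vertices are `1, …, n+2`.  For `1 ≤ i ≤ n+1`, `ε i = true` means that the arrow between
`i` and `i+1` is oriented `i → i+1` (`i` is *upper-barred*), and `ε i = false` means it is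
oriented `(i+1) → i` (`i` is *lower-barred*). -/

/-- `MaxIncr n ε i j` : the path `i → i+1 → ⋯ → j` is a maximal increasing path of `Q`. -/
def MaxIncr (n : ℕ) (ε : ℕ → Bool) (i j : ℕ) : Prop :=
  1 ≤ i ∧ i ≤ j ∧ j ≤ n + 2 ∧ (∀ ℓ, i ≤ ℓ → ℓ < j → ε ℓ = true) ∧
    (i = 1 ∨ ε (i - 1) = false) ∧ (j = n + 2 ∨ ε j = false)

/-- `MaxDecr n ε i j` : the path `i → i-1 → ⋯ → j` is a maximal decreasing path of `Q`. -/
def MaxDecr (n : ℕ) (ε : ℕ → Bool) (i j : ℕ) : Prop :=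
  1 ≤ j ∧ j ≤ i ∧ i ≤ n + 2 ∧ (∀ ℓ, j ≤ ℓ → ℓ < i → ε ℓ = false) ∧
    (i = n + 2 ∨ ε i = true) ∧ (j = 1 ∨ ε (j - 1) = true)

/-- Vertices of the polygon lying on the lower boundary: `0`, `n+2` and lower-barred ones. -/
def LowerVertex (n : ℕ) (ε : ℕ → Bool) (x : ℕ) : Prop :=
  x = 0 ∨ x = n + 2 ∨ (1 ≤ x ∧ x ≤ n + 1 ∧ ε x = false)

/-- Vertices of the polygon lying on the upper boundary: `0`, `n+2` and upper-barred ones. -/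
def UpperVertex (n : ℕ) (ε : ℕ → Bool) (x : ℕ) : Prop :=
  x = 0 ∨ x = n + 2 ∨ (1 ≤ x ∧ x ≤ n + 1 ∧ ε x = true)

/-- `(a,b)` is a lower boundary edge: `a < b` are consecutive lower vertices. -/
def LowerEdge (n : ℕ) (ε : ℕ → Bool) (a b : ℕ) : Prop :=
  LowerVertex n ε a ∧ LowerVertex n ε b ∧ a < b ∧
    ∀ c, LowerVertex n ε c → ¬(a < c ∧ c < b)

/-- `(a,b)` is an upper boundary edge: `a < b` are consecutive upper vertices. -/
def UpperEdge (n : ℕ) (ε : ℕ → Bool) (a b : ℕ) : Prop :=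
  UpperVertex n ε a ∧ UpperVertex n ε b ∧ a < b ∧
    ∀ c, UpperVertex n ε c → ¬(a < c ∧ c < b)

def BoundaryEdge (n : ℕ) (ε : ℕ → Bool) (a b : ℕ) : Prop :=
  LowerEdge n ε a b ∨ UpperEdge n ε a b

/-- `IsHook n ε a lo hi` : the hook of the arrow of `Q` between `a` and `a+1` is the
maximal path supported on the interval `[lo, hi]`.
If `ε a = true` (arrow `a → a+1`, source `a`), the hook is the maximal decreasing path
starting at `a`; if `ε a = false` (arrow `a+1 → a`, source `a+1`), the hook is the
maximal increasing path starting at `a+1`. -/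
def IsHook (n : ℕ) (ε : ℕ → Bool) (a lo hi : ℕ) : Prop :=
  if ε a = true then
    hi = a ∧ 1 ≤ lo ∧ lo ≤ a ∧ (∀ ℓ, lo ≤ ℓ → ℓ < a → ε ℓ = false) ∧
      (lo = 1 ∨ ε (lo - 1) = true)
  else
    lo = a + 1 ∧ a + 1 ≤ hi ∧ hi ≤ n + 2 ∧ (∀ ℓ, a + 1 ≤ ℓ → ℓ < hi → ε ℓ = true) ∧
      (hi = n + 2 ∨ ε hi = false)

/-- `IsCohook n ε a lo hi` : the cohook of the arrow of `Q` between `a` and `a+1` is the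
maximal path supported on the interval `[lo, hi]`, ending at the target of the arrow. -/
def IsCohook (n : ℕ) (ε : ℕ → Bool) (a lo hi : ℕ) : Prop :=
  if ε a = true then
    lo = a + 1 ∧ a + 1 ≤ hi ∧ hi ≤ n + 2 ∧ (∀ ℓ, a + 1 ≤ ℓ → ℓ < hi → ε ℓ = false) ∧
      (hi = n + 2 ∨ ε hi = true)
  else
    hi = a ∧ 1 ≤ lo ∧ lo ≤ a ∧ (∀ ℓ, lo ≤ ℓ → ℓ < a → ε ℓ = true) ∧
      (lo = 1 ∨ ε (lo - 1) = false)

/-- Counterclockwise neighbor `R⁻¹(ℓ)` of the vertex `ℓ` of the polygon `P(Q)`, for the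
cyclic order `0`, lower-barred vertices increasing, `n+2`, upper-barred vertices
decreasing. -/
def Rinv (n : ℕ) (ε : ℕ → Bool) (ℓ : ℕ) : ℕ :=
  if ℓ = n + 2 then sSup ({0} ∪ {x | 1 ≤ x ∧ x ≤ n + 1 ∧ ε x = true})
  else if 1 ≤ ℓ ∧ ℓ ≤ n + 1 ∧ ε ℓ = true then
    sSup ({0} ∪ {x | 1 ≤ x ∧ x < ℓ ∧ ε x = true})
  else
    sInf ({n + 2} ∪ {x | ℓ < x ∧ x ≤ n + 1 ∧ ε x = false})

/-- `γ(i′,j′)` is a pivot of `γ(i,j)`. -/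
def IsPivot (n : ℕ) (ε : ℕ → Bool) (i j i' j' : ℕ) : Prop :=
  (i' = Rinv n ε i ∧ j' = j ∧ Rinv n ε i < j) ∨
    (i' = i ∧ j' = Rinv n ε j ∧ i < Rinv n ε j)

/-! ### Geometry of the polygon `P(Q)`.

The plane is identified with `ℂ`; `p x` is the vertex of the polygon labeled `x`,
for `0 ≤ x ≤ n+2`. -/

/-- The hypotheses on the points `p 0, …, p (n+2)` realizing the polygon `P(Q)`:
strictly increasing `x`-coordinates; `p 0` and `p (n+2)` on a common horizontal line `L`;
upper-barred vertices above `L`, lower-barred vertices below `L`; convex position. -/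
def PolyPts (n : ℕ) (ε : ℕ → Bool) (p : ℕ → ℂ) : Prop :=
  (∀ a b, a < b → b ≤ n + 2 → (p a).re < (p b).re) ∧
    (p (n + 2)).im = (p 0).im ∧
    (∀ i, 1 ≤ i → i ≤ n + 1 →
      (ε i = true → (p 0).im < (p i).im) ∧ (ε i = false → (p i).im < (p 0).im)) ∧
    ∀ i, i ≤ n + 2 → p i ∉ convexHull ℝ (p '' {j | j ≤ n + 2 ∧ j ≠ i})

/-- The line segment `γ(e.1, e.2)` of the polygon. -/
def Seg (p : ℕ → ℂ) (e : ℕ × ℕ) : Set ℂ := segment ℝ (p e.1) (p e.2)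

/-- Two segments cross when they intersect in a point that is not a common endpoint. -/
def Cross (p : ℕ → ℂ) (e f : ℕ × ℕ) : Prop :=
  ∃ z, z ∈ Seg p e ∧ z ∈ Seg p f ∧
    ¬((z = p e.1 ∨ z = p e.2) ∧ (z = p f.1 ∨ z = p f.2))

/-- Slope of the segment `γ(e.1, e.2)`. -/
def slope (p : ℕ → ℂ) (e : ℕ × ℕ) : ℝ :=
  ((p e.2).im - (p e.1).im) / ((p e.2).re - (p e.1).re)

def ValidPair (n : ℕ) (e : ℕ × ℕ) : Prop := e.1 < e.2 ∧ e.2 ≤ n + 2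

/-- A triangulation of `P(Q)`: a maximal collection of pairwise noncrossing segments. -/
def IsTriangulation (n : ℕ) (p : ℕ → ℂ) (T : Finset (ℕ × ℕ)) : Prop :=
  (∀ e ∈ T, ValidPair n e) ∧ (∀ e ∈ T, ∀ f ∈ T, e ≠ f → ¬Cross p e f) ∧
    ∀ e, ValidPair n e → e ∉ T → ∃ f ∈ T, Cross p e f

/-- Cross product of two planar vectors; positive iff `(u, v)` is counterclockwise. -/
def cross2 (u v : ℂ) : ℝ := u.re * v.im - u.im * v.re

/-- Arrows of the adjacency quiver `Q(T)` of a triangulation `T`: `e → f` whenever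
`e` and `f` are sides of a common triangle of `T` and `f` follows `e` going
counterclockwise around that triangle. -/
def TriArrow (p : ℕ → ℂ) (T : Finset (ℕ × ℕ)) (e f : ℕ × ℕ) : Prop :=
  ∃ a b c : ℕ, a < b ∧ b < c ∧ (a, b) ∈ T ∧ (b, c) ∈ T ∧ (a, c) ∈ T ∧
    ((0 < cross2 (p b - p a) (p c - p a) ∧
        ((e = (a, b) ∧ f = (b, c)) ∨ (e = (b, c) ∧ f = (a, c)) ∨
          (e = (a, c) ∧ f = (a, b)))) ∨
      (cross2 (p b - p a) (p c - p a) < 0 ∧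
        ((e = (a, c) ∧ f = (b, c)) ∨ (e = (b, c) ∧ f = (a, b)) ∨
          (e = (a, b) ∧ f = (a, c)))))

/-! ### Representations of `Q` -/

/-- A finite dimensional representation of the quiver `Q` of type `A_{n+2}` over `k`.
The vector spaces are indexed by `ℕ`, and are required to vanish outside the set
`{1, …, n+2}` of vertices of `Q`.  For each `i`, `fwd i : V i → V (i+1)` is the structure
map of the arrow `i → i+1` (it is required to vanish when the arrow is oriented in the
other direction, i.e. `ε i = false`) and `bwd i : V (i+1) → V i` is the structure map of
the arrow `i+1 → i` (required to vanish when `ε i = true`). -/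
structure ARep (k : Type) [Field k] (n : ℕ) (ε : ℕ → Bool) where
  V : ℕ → Type
  [acg : ∀ x, AddCommGroup (V x)]
  [mod : ∀ x, Module k (V x)]
  [fdim : ∀ x, FiniteDimensional k (V x)]
  triv : ∀ x, x = 0 ∨ n + 2 < x → ∀ v : V x, v = 0
  fwd : ∀ i, V i →ₗ[k] V (i + 1)
  bwd : ∀ i, V (i + 1) →ₗ[k] V i
  fwd_zero : ∀ i, ε i = false → fwd i = 0
  bwd_zero : ∀ i, ε i = true → bwd i = 0

attribute [instance] ARep.acg ARep.mod ARep.fdim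

variable {k : Type} [Field k] {n : ℕ} {ε : ℕ → Bool}

/-- Morphisms of representations. -/
@[ext]
structure ARep.Hom (M N : ARep k n ε) where
  app : ∀ x, M.V x →ₗ[k] N.V x
  comm_fwd : ∀ i (v : M.V i), app (i + 1) (M.fwd i v) = N.fwd i (app i v)
  comm_bwd : ∀ i (v : M.V (i + 1)), app i (M.bwd i v) = N.bwd i (app (i + 1) v)

/-- The identity morphism. -/
def ARep.Hom.id (M : ARep k n ε) : M.Hom M :=
  ⟨fun _ => LinearMap.id, fun _ _ => rfl, fun _ _ => rfl⟩

/-- Composition of morphisms. -/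
def ARep.Hom.comp {M N P : ARep k n ε} (g : N.Hom P) (f : M.Hom N) : M.Hom P where
  app x := (g.app x).comp (f.app x)
  comm_fwd i v := by simp only [LinearMap.comp_apply, f.comm_fwd, g.comm_fwd]
  comm_bwd i v := by simp only [LinearMap.comp_apply, f.comm_bwd, g.comm_bwd]

/-- Sum of two morphisms. -/
def ARep.Hom.add {M N : ARep k n ε} (f g : M.Hom N) : M.Hom N where
  app x := f.app x + g.app x
  comm_fwd i v := by
    simp only [LinearMap.add_apply, f.comm_fwd, g.comm_fwd, map_add]
  comm_bwd i v := by
    simp only [LinearMap.add_apply, f.comm_bwd, g.comm_bwd, map_add]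

/-- Scalar multiple of a morphism. -/
def ARep.Hom.smul {M N : ARep k n ε} (c : k) (f : M.Hom N) : M.Hom N where
  app x := c • f.app x
  comm_fwd i v := by simp only [LinearMap.smul_apply, f.comm_fwd, map_smul]
  comm_bwd i v := by simp only [LinearMap.smul_apply, f.comm_bwd, map_smul]

/-- Isomorphism of representations. -/
def ARep.Iso (M N : ARep k n ε) : Prop :=
  ∃ f : M.Hom N, ∀ x, Function.Bijective (f.app x)

/-- The zero representation(s). -/
def ARep.IsZero (M : ARep k n ε) : Prop := ∀ x, ∀ v : M.V x, v = 0

/-- The support of a representation. -/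
def ARep.supp (M : ARep k n ε) : Set ℕ := {x | ∃ v : M.V x, v ≠ 0}

/-- Direct sum of two representations. -/
def ARep.dsum (M N : ARep k n ε) : ARep k n ε where
  V x := M.V x × N.V x
  acg _ := by infer_instance
  mod _ := by infer_instance
  fdim _ := by infer_instance
  triv x hx v := by
    have h1 := M.triv x hx v.1
    have h2 := N.triv x hx v.2
    exact Prod.ext h1 h2
  fwd i := (M.fwd i).prodMap (N.fwd i)
  bwd i := (M.bwd i).prodMap (N.bwd i)
  fwd_zero i h := by
    show (M.fwd i).prodMap (N.fwd i) = 0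
    rw [M.fwd_zero i h, N.fwd_zero i h]
    apply LinearMap.ext; rintro ⟨a, b⟩; simp
  bwd_zero i h := by
    show (M.bwd i).prodMap (N.bwd i) = 0
    rw [M.bwd_zero i h, N.bwd_zero i h]
    apply LinearMap.ext; rintro ⟨a, b⟩; simp

/-- One dimensional space `k` if `P` holds, `0` otherwise (as a submodule of `k`). -/
def fiber (k : Type) [Field k] (P : Prop) : Submodule k k := if P then ⊤ else ⊥

/-- The canonical map `fiber k P → fiber k Q` : "identity" if `P ∧ Q`, zero otherwise. -/
def fiberMap (k : Type) [Field k] (P Q : Prop) : fiber k P →ₗ[k] fiber k Q :=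
  if h : P ∧ Q then
    { toFun := fun v => ⟨(v : k), by
        rw [show fiber k Q = ⊤ from if_pos h.2]; exact Submodule.mem_top⟩
      map_add' := fun _ _ => rfl
      map_smul' := fun _ _ => rfl }
  else 0

/-- The zero representation. -/
def zeroRep (k : Type) [Field k] (n : ℕ) (ε : ℕ → Bool) : ARep k n ε where
  V _ := ↥(fiber k False)
  acg _ := by infer_instance
  mod _ := by infer_instance
  fdim _ := by infer_instance
  triv x _ v := by
    have hfib : fiber k False = ⊥ := if_neg (fun h : False => h.elim)
    obtain ⟨w, hw⟩ := v
    apply Subtype.ext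
    have hb : w ∈ (⊥ : Submodule k k) := hfib ▸ hw
    exact (Submodule.mem_bot k).1 hb
  fwd _ := 0
  bwd _ := 0
  fwd_zero _ _ := rfl
  bwd_zero _ _ := rfl

/-- The condition for a vertex `x` to be in the support of the interval representation
`M(i,j)`. -/
def SuppCond (n i j x : ℕ) : Prop := i ≤ x ∧ x ≤ j ∧ 1 ≤ x ∧ x ≤ n + 2

/-- The interval (string) representation `M(i,j)` of `Q`: one dimensional at each vertex
`x` with `i ≤ x ≤ j`, zero elsewhere, with identity maps on all arrows whose endpoints
both lie in `[i,j]`. -/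
def intervalRep (k : Type) [Field k] (n : ℕ) (ε : ℕ → Bool) (i j : ℕ) : ARep k n ε where
  V x := ↥(fiber k (SuppCond n i j x))
  acg _ := by infer_instance
  mod _ := by infer_instance
  fdim _ := by infer_instance
  triv x hx v := by
    have hP : ¬SuppCond n i j x := by simp only [SuppCond]; omega
    have hfib : fiber k (SuppCond n i j x) = ⊥ := if_neg hP
    obtain ⟨w, hw⟩ := v
    apply Subtype.ext
    have hb : w ∈ (⊥ : Submodule k k) := hfib ▸ hw
    exact (Submodule.mem_bot k).1 hb
  fwd ℓ :=
    if ε ℓ = true then fiberMap k (SuppCond n i j ℓ) (SuppCond n i j (ℓ + 1)) else 0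
  bwd ℓ :=
    if ε ℓ = true then 0 else fiberMap k (SuppCond n i j (ℓ + 1)) (SuppCond n i j ℓ)
  fwd_zero ℓ h := by simp [h]
  bwd_zero ℓ h := by simp [h]

/-- Direct sum of a list of representations. -/
def dsumList (k : Type) [Field k] (n : ℕ) (ε : ℕ → Bool) :
    List (ARep k n ε) → ARep k n ε
  | [] => zeroRep k n ε
  | M :: L => M.dsum (dsumList k n ε L)

/-- Indecomposable representations. -/
def ARep.Indec (M : ARep k n ε) : Prop :=
  ¬M.IsZero ∧ ∀ A B : ARep k n ε, M.Iso (A.dsum B) → A.IsZero ∨ B.IsZero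

/-- `A` is a direct summand of `T`. -/
def ARep.IsSummand (A T : ARep k n ε) : Prop := ∃ B : ARep k n ε, T.Iso (A.dsum B)

/-- A representation is basic when it has no repeated indecomposable direct summand. -/
def ARep.Basic (T : ARep k n ε) : Prop :=
  ∀ A : ARep k n ε, A.Indec → ¬(A.dsum A).IsSummand T

/-- A short exact sequence `0 → B → E → A → 0`. -/
structure SES (B A : ARep k n ε) where
  E : ARep k n ε
  ι : B.Hom E
  π : E.Hom A
  inj : ∀ x, Function.Injective (ι.app x)
  surj : ∀ x, Function.Surjective (π.app x)
  exct : ∀ x (v : E.V x), π.app x v = 0 ↔ ∃ u, ι.app x u = v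

/-- A short exact sequence splits. -/
def SES.Splits {B A : ARep k n ε} (σ : SES B A) : Prop :=
  ∃ r : σ.E.Hom B, ∀ x (v : B.V x), r.app x (σ.ι.app x v) = v

/-- `Ext¹(A, B) = 0` : every short exact sequence `0 → B → E → A → 0` splits. -/
def ExtZero (A B : ARep k n ε) : Prop := ∀ σ : SES B A, σ.Splits

/-- `Ext¹(A,B) ≅ k`, generated by (the class of) a short exact sequence
`0 → B → E → A → 0` with indecomposable middle term `E`: there is a non-split such
sequence `σ` with `σ.E` indecomposable such that every non-split sequence is equivalent
to a nonzero scalar multiple of `σ`. -/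
def ExtOneDimIndecMid (A B : ARep k n ε) : Prop :=
  ∃ σ : SES B A, ¬σ.Splits ∧ σ.E.Indec ∧
    ∀ τ : SES B A, ¬τ.Splits → ∃ c : k, c ≠ 0 ∧
      ∃ φ : σ.E.Hom τ.E, (∀ x, Function.Bijective (φ.app x)) ∧
        (∀ x (v : B.V x), φ.app x (σ.ι.app x v) = τ.ι.app x v) ∧
        (∀ x (v : σ.E.V x), τ.π.app x (φ.app x v) = c • σ.π.app x v)

/-- Almost rigid representations. -/
def AlmostRigid (T : ARep k n ε) : Prop :=
  T.Basic ∧ ∀ A B : ARep k n ε, A.Indec → B.Indec → A.IsSummand T → B.IsSummand T →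
    ExtZero A B ∨ ExtOneDimIndecMid A B

/-- Maximal almost rigid representations. -/
def MaxAlmostRigid (T : ARep k n ε) : Prop :=
  AlmostRigid T ∧ ∀ M : ARep k n ε, ¬M.IsZero → ¬AlmostRigid (T.dsum M)

/-- `f` is a section. -/
def ARep.Hom.IsSection {M N : ARep k n ε} (f : M.Hom N) : Prop :=
  ∃ g : N.Hom M, ∀ x (v : M.V x), g.app x (f.app x v) = v

/-- `f` is a retraction. -/
def ARep.Hom.IsRetraction {M N : ARep k n ε} (f : M.Hom N) : Prop :=
  ∃ g : N.Hom M, ∀ x (v : N.V x), f.app x (g.app x v) = v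

/-- Irreducible morphisms: `f` is neither a section nor a retraction, and in every
factorization `f = g ∘ h` either `h` is a section or `g` is a retraction. -/
def ARep.Hom.Irred {M N : ARep k n ε} (f : M.Hom N) : Prop :=
  ¬f.IsSection ∧ ¬f.IsRetraction ∧
    ∀ (Z : ARep k n ε) (h : M.Hom Z) (g : Z.Hom N),
      (∀ x (v : M.V x), f.app x v = g.app x (h.app x v)) → h.IsSection ∨ g.IsRetraction

/-- Subrepresentations : families of subspaces closed under the structure maps. -/
structure Subrep (M : ARep k n ε) where
  U : ∀ x, Submodule k (M.V x)
  fwd_mem : ∀ i, ∀ v ∈ U i, M.fwd i v ∈ U (i + 1)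
  bwd_mem : ∀ i, ∀ v ∈ U (i + 1), M.bwd i v ∈ U i

/-- The central charge `Z(M) = Σ_{x=1}^{n+2} dim_k(M_x) · (p_x − p_{x−1})`. -/
def charge (p : ℕ → ℂ) (M : ARep k n ε) : ℂ :=
  ∑ x ∈ Finset.Icc 1 (n + 2), (Module.finrank k (M.V x) : ℂ) * (p x - p (x - 1))

/-- The central charge of a subrepresentation. -/
def subCharge (p : ℕ → ℂ) {M : ARep k n ε} (L : Subrep M) : ℂ :=
  ∑ x ∈ Finset.Icc 1 (n + 2), (Module.finrank k (L.U x) : ℂ) * (p x - p (x - 1))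

/-- The representation `F(T) = ⊕_{γ(a,b) ∈ T} M(a+1, b)` attached to a collection `T` of
segments of the polygon `P(Q)`. -/
def FRep (k : Type) [Field k] (n : ℕ) (ε : ℕ → Bool) (T : Finset (ℕ × ℕ)) : ARep k n ε :=
  dsumList k n ε (T.toList.map fun e => intervalRep k n ε (e.1 + 1) e.2)

end CambrianA

namespace CambrianA

/-- A diagonal of `P(Q)` : a valid segment which is not a boundary edge. -/
def Diagonal (n : ℕ) (ε : ℕ → Bool) (e : ℕ × ℕ) : Prop :=
  ValidPair n e ∧ ¬BoundaryEdge n ε e.1 e.2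

/-- The covering relation of the Cambrian lattice on triangulations: `T₁` is covered by
`T₂` when they differ by a single diagonal flip which increases the slope. -/
def TriCovers (n : ℕ) (ε : ℕ → Bool) (p : ℕ → ℂ) (T1 T2 : Finset (ℕ × ℕ)) : Prop :=
  ∃ e1 e2 : ℕ × ℕ, e1 ≠ e2 ∧ Diagonal n ε e1 ∧ Diagonal n ε e2 ∧
    e1 ∈ T1 ∧ e2 ∈ T2 ∧ T1.erase e1 = T2.erase e2 ∧ slope p e1 < slope p e2

variable {k : Type} [Field k] {n : ℕ} {ε : ℕ → Bool}

/-- The covering relation on maximal almost rigid representations: `T₁` is covered by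
`T₂` when there are indecomposable summands `Mᵢ` of `Tᵢ` with `T₁/M₁ ≅ T₂/M₂` (common
complement `C`) and a non-split short exact sequence `0 → M₁ → E ⊕ E′ → M₂ → 0` whose
middle terms `E, E′` are indecomposable summands of `T₁/M₁ ≅ C`. -/
def MarCovers (T1 T2 : ARep k n ε) : Prop :=
  ∃ M1 M2 C : ARep k n ε, M1.Indec ∧ M2.Indec ∧
    T1.Iso (M1.dsum C) ∧ T2.Iso (M2.dsum C) ∧
    ∃ σ : SES M1 M2, ¬σ.Splits ∧ ∃ E E' : ARep k n ε, E.Indec ∧ E'.Indec ∧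
      E.IsSummand C ∧ E'.IsSummand C ∧ σ.E.Iso (E.dsum E')

/-! `Ext¹(M(f), M(e))` is nonzero exactly when at the left end of their overlap `γ(e)` lies above
`γ(f)` and at the right end below, where the overlap may be a single point. If the segments cross,
the middle term of the extension is the sum of two opposite sides of the quadrilateral they span;
if they share only a vertex, one of these two sides is degenerate, so the middle term is
indecomposable and the extension unique. Hence almost rigid means noncrossing, maximal almost rigid
means triangulation, and both covering relations replace one segment by a steeper one crossing it:
the sides of the quadrilateral lie in the common part by maximality. Isomorphism classes are
compared through the Krull–Schmidt theorem. -/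

/-! ### Morphisms and direct sums -/

/-- Tail of the arrow of `Q` between `i` and `i + 1`, which points to `i + 1` iff `b = true`. -/
def src (b : Bool) (i : ℕ) : ℕ := bif b then i else i + 1

/-- Head of the arrow of `Q` between `i` and `i + 1`, which points to `i + 1` iff `b = true`. -/
def tgt (b : Bool) (i : ℕ) : ℕ := bif b then i + 1 else i

namespace ARep

variable {M N P M' N' : ARep k n ε}

/-- The map of `M` from `src b i` to `tgt b i`; it is the structure map of an arrow of `Q` only
for `b = ε i`. -/
def edgeMap (M : ARep k n ε) (i : ℕ) : (b : Bool) → M.V (src b i) →ₗ[k] M.V (tgt b i)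
  | true => M.fwd i
  | false => M.bwd i

/-- The structure map of the arrow of `Q` between `i` and `i + 1`, whichever way it points. -/
def arrow (M : ARep k n ε) (i : ℕ) : M.V (src (ε i) i) →ₗ[k] M.V (tgt (ε i) i) :=
  M.edgeMap i (ε i)

theorem Hom.comm_arrow (f : M.Hom N) (i : ℕ) (v : M.V (src (ε i) i)) :
    f.app _ (M.arrow i v) = N.arrow i (f.app _ v) := by
  have key (b : Bool) (v : M.V (src b i)) :
      f.app _ (M.edgeMap i b v) = N.edgeMap i b (f.app _ v) := by
    cases b
    · exact f.comm_bwd i v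
    · exact f.comm_fwd i v
  exact key _ v

/-- A morphism from a family of linear maps commuting with the arrows of `Q`. -/
def Hom.ofArrow (app : ∀ x, M.V x →ₗ[k] N.V x)
    (comm : ∀ i v, app _ (M.arrow i v) = N.arrow i (app _ v)) : M.Hom N where
  app := app
  comm_fwd i := by
    cases hi : ε i with
    | true =>
      have hcomm := comm i
      simp only [arrow] at hcomm
      rw [hi] at hcomm
      exact hcomm
    | false => simp [M.fwd_zero i hi, N.fwd_zero i hi]
  comm_bwd i := by
    cases hi : ε i with
    | true => simp [M.bwd_zero i hi, N.bwd_zero i hi]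
    | false =>
      have hcomm := comm i
      simp only [arrow] at hcomm
      rw [hi] at hcomm
      exact hcomm

theorem Iso.of_inverse (f : M.Hom N) (g : N.Hom M) (hgf : ∀ x v, g.app x (f.app x v) = v)
    (hfg : ∀ x v, f.app x (g.app x v) = v) : M.Iso N :=
  ⟨f, fun x => Function.bijective_iff_has_inverse.2 ⟨g.app x, hgf x, hfg x⟩⟩

theorem Hom.exists_inverse (f : M.Hom N) (hf : ∀ x, Function.Bijective (f.app x)) :
    ∃ g : N.Hom M, (∀ x v, g.app x (f.app x v) = v) ∧ ∀ x v, f.app x (g.app x v) = v := by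
  let e (x : ℕ) : M.V x ≃ₗ[k] N.V x := LinearEquiv.ofBijective (f.app x) (hf x)
  have app_symm (x : ℕ) (v : N.V x) : f.app x ((e x).symm v) = v := (e x).apply_symm_apply v
  refine ⟨ofArrow (fun x => (e x).symm) fun i v => (hf _).1 ?_,
    fun x => (e x).symm_apply_apply, app_symm⟩
  simp only [LinearEquiv.coe_coe, f.comm_arrow, app_symm]

theorem Iso.refl (M : ARep k n ε) : M.Iso M := ⟨Hom.id M, fun _ => Function.bijective_id⟩

theorem Iso.symm (h : M.Iso N) : N.Iso M := by
  obtain ⟨f, hf⟩ := h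
  obtain ⟨g, hgf, hfg⟩ := f.exists_inverse hf
  exact .of_inverse g f hfg hgf

theorem Iso.trans (h : M.Iso N) (h' : N.Iso P) : M.Iso P := by
  obtain ⟨f, hf⟩ := h
  obtain ⟨g, hg⟩ := h'
  exact ⟨g.comp f, fun x => (hg x).comp (hf x)⟩

theorem IsZero.of_iso (hM : M.IsZero) (h : M.Iso N) : N.IsZero := by
  obtain ⟨f, hf⟩ := h
  intro x v
  obtain ⟨u, rfl⟩ := (hf x).2 v
  rw [hM x u, map_zero]

/-- First projection. -/
def fst (M N : ARep k n ε) : (M.dsum N).Hom M :=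
  ⟨fun x => LinearMap.fst k (M.V x) (N.V x), fun _ _ => rfl, fun _ _ => rfl⟩

/-- Second projection. -/
def snd (M N : ARep k n ε) : (M.dsum N).Hom N :=
  ⟨fun x => LinearMap.snd k (M.V x) (N.V x), fun _ _ => rfl, fun _ _ => rfl⟩

/-- The morphism into a direct sum with components `f` and `g`. -/
def Hom.prod (f : P.Hom M) (g : P.Hom N) : P.Hom (M.dsum N) where
  app x := (f.app x).prod (g.app x)
  comm_fwd i v := Prod.ext (f.comm_fwd i v) (g.comm_fwd i v)
  comm_bwd i v := Prod.ext (f.comm_bwd i v) (g.comm_bwd i v)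

/-- The zero morphism. -/
def Hom.zero (M N : ARep k n ε) : M.Hom N :=
  ⟨fun _ => 0, fun _ _ => (map_zero _).symm, fun _ _ => (map_zero _).symm⟩

/-- First inclusion. -/
def inl (M N : ARep k n ε) : M.Hom (M.dsum N) := (Hom.id M).prod (Hom.zero M N)

/-- Second inclusion. -/
def inr (M N : ARep k n ε) : N.Hom (M.dsum N) := (Hom.zero N M).prod (Hom.id N)

/-- The morphism out of a direct sum with components `f` and `g`. -/
def Hom.coprod (f : M.Hom P) (g : N.Hom P) : (M.dsum N).Hom P :=
  (f.comp (fst M N)).add (g.comp (snd M N))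

theorem Iso.dsum (h : M.Iso M') (h' : N.Iso N') : (M.dsum N).Iso (M'.dsum N') := by
  obtain ⟨f, hf⟩ := h
  obtain ⟨g, hg⟩ := h'
  exact ⟨(f.comp (fst M N)).prod (g.comp (snd M N)), fun x => (hf x).prodMap (hg x)⟩

theorem Iso.dsum_comm (M N : ARep k n ε) : (M.dsum N).Iso (N.dsum M) :=
  .of_inverse ((snd M N).prod (fst M N)) ((snd N M).prod (fst N M)) (fun _ _ => rfl)
    fun _ _ => rfl

theorem Iso.dsum_assoc (M N P : ARep k n ε) : ((M.dsum N).dsum P).Iso (M.dsum (N.dsum P)) :=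
  .of_inverse
    (((fst M N).comp (fst _ P)).prod (((snd M N).comp (fst _ P)).prod (snd _ P)))
    (((fst M _).prod ((fst N P).comp (snd M _))).prod ((snd N P).comp (snd M _)))
    (fun _ _ => rfl) fun _ _ => rfl

theorem Iso.zero_dsum (hM : M.IsZero) : (M.dsum N).Iso N :=
  .of_inverse (snd M N) (inr M N) (fun x v => Prod.ext (hM x v.1).symm rfl) fun _ _ => rfl

theorem Iso.dsum_zero (hN : N.IsZero) : (M.dsum N).Iso M :=
  (Iso.dsum_comm M N).trans (Iso.zero_dsum hN)

theorem fiber_coe_eq_zero {P : Prop} (hP : ¬P) (v : fiber k P) : (v : k) = 0 := by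
  have hv : (v : k) ∈ (if P then ⊤ else ⊥ : Submodule k k) := v.2
  rwa [if_neg hP, Submodule.mem_bot] at hv

theorem zeroRep_isZero : (zeroRep k n ε).IsZero :=
  fun _ v => Subtype.ext (fiber_coe_eq_zero not_false v)

theorem Indec.of_iso (hM : M.Indec) (h : M.Iso N) : N.Indec :=
  ⟨fun hN => hM.1 (hN.of_iso h.symm), fun A B hAB => hM.2 A B (h.trans hAB)⟩

theorem IsSummand.of_iso (h : M.IsSummand N) (hM : M.Iso M') (hN : N.Iso N') :
    M'.IsSummand N' := by
  obtain ⟨B, hB⟩ := h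
  exact ⟨B, (hN.symm.trans hB).trans (hM.dsum (.refl B))⟩

/-- The kernel of a morphism. -/
def ker (g : M.Hom N) : ARep k n ε where
  V x := LinearMap.ker (g.app x)
  triv x hx v := Subtype.ext (M.triv x hx v.1)
  fwd i := (M.fwd i).restrict fun v hv => by
    rw [LinearMap.mem_ker] at hv ⊢
    rw [g.comm_fwd, hv, map_zero]
  bwd i := (M.bwd i).restrict fun v hv => by
    rw [LinearMap.mem_ker] at hv ⊢
    rw [g.comm_bwd, hv, map_zero]
  fwd_zero i hi := LinearMap.ext fun v => Subtype.ext (by simp [M.fwd_zero i hi])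
  bwd_zero i hi := LinearMap.ext fun v => Subtype.ext (by simp [M.bwd_zero i hi])

/-- The inclusion of the kernel. -/
def ker.incl (g : M.Hom N) : (ker g).Hom M :=
  ⟨fun x => (LinearMap.ker (g.app x)).subtype, fun _ _ => rfl, fun _ _ => rfl⟩

theorem iso_dsum_ker (f : N.Hom M) (g : M.Hom N) (hgf : ∀ x v, g.app x (f.app x v) = v) :
    M.Iso (N.dsum (ker g)) := by
  refine Iso.symm ⟨f.coprod (ker.incl g), fun x => ⟨?_, fun v => ?_⟩⟩
  · refine (injective_iff_map_eq_zero _).2 ?_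
    rintro ⟨u, w, hw⟩ huw
    have huw : f.app x u + w = 0 := huw
    have hu : u = 0 := by
      simpa [hgf, LinearMap.mem_ker.1 hw] using congrArg (g.app x) huw
    subst hu
    rw [map_zero, zero_add] at huw
    exact Prod.ext rfl (Subtype.ext huw)
  · refine ⟨(g.app x v, ⟨v - f.app x (g.app x v), ?_⟩), add_sub_cancel (f.app x (g.app x v)) v⟩
    rw [LinearMap.mem_ker, map_sub, hgf, sub_self]

end ARep

/-! ### Interval representations -/

namespace ARep

variable {X : ARep k n ε} {e f g : ℕ × ℕ}

/-- The interval representation `M(e.1 + 1, e.2)` attached to the segment `γ(e.1, e.2)`. -/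
abbrev ofSeg (k : Type) [Field k] (n : ℕ) (ε : ℕ → Bool) (e : ℕ × ℕ) : ARep k n ε :=
  intervalRep k n ε (e.1 + 1) e.2

/-- The vertex `x` supports `ofSeg k n ε e`. -/
abbrev InSupp (n : ℕ) (e : ℕ × ℕ) (x : ℕ) : Prop := SuppCond n (e.1 + 1) e.2 x

theorem inSupp_iff (he : e.2 ≤ n + 2) (x : ℕ) : InSupp n e x ↔ e.1 < x ∧ x ≤ e.2 := by
  simp only [InSupp, SuppCond]
  omega

/-- The coordinate of a vector of an interval representation. -/
def coord (e : ℕ × ℕ) (x : ℕ) : (ofSeg k n ε e).V x →ₗ[k] k :=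
  (fiber k (InSupp n e x)).subtype

theorem coord_injective (e : ℕ × ℕ) (x : ℕ) :
    Function.Injective (coord e x : (ofSeg k n ε e).V x → k) :=
  Subtype.val_injective

theorem coord_eq_zero {x : ℕ} (hx : ¬InSupp n e x) (u : (ofSeg k n ε e).V x) : coord e x u = 0 :=
  fiber_coe_eq_zero hx u

/-- The basis vector of an interval representation at `x`; zero if `x` is not in the support. -/
def gen (e : ℕ × ℕ) (x : ℕ) : (ofSeg k n ε e).V x :=
  ⟨if InSupp n e x then 1 else 0, by
    unfold fiber
    split_ifs
    exacts [Submodule.mem_top, Submodule.zero_mem _]⟩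

theorem coord_gen (e : ℕ × ℕ) (x : ℕ) :
    coord e x (gen e x : (ofSeg k n ε e).V x) = if InSupp n e x then 1 else 0 := rfl

theorem coord_smul_gen (e : ℕ × ℕ) (x : ℕ) (u : (ofSeg k n ε e).V x) :
    coord e x u • gen e x = u := by
  apply coord_injective
  rw [map_smul, coord_gen]
  split_ifs with hx
  · simp
  · simp [coord_eq_zero hx]

theorem gen_eq_zero {x : ℕ} (hx : ¬InSupp n e x) : (gen e x : (ofSeg k n ε e).V x) = 0 :=
  coord_injective e x (by rw [coord_gen, if_neg hx, map_zero])

theorem gen_ne_zero {x : ℕ} (hx : InSupp n e x) : (gen e x : (ofSeg k n ε e).V x) ≠ 0 := fun h => by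
  simpa [coord_gen, hx] using congrArg (coord e x) h

theorem fiberMap_coe (P Q : Prop) (v : fiber k P) :
    (fiberMap k P Q v : k) = if Q then (v : k) else 0 := by
  by_cases hP : P <;> by_cases hQ : Q <;> simp [fiberMap, hP, hQ, fiber_coe_eq_zero]

theorem coord_arrow (e : ℕ × ℕ) (i : ℕ) (u : (ofSeg k n ε e).V (src (ε i) i)) :
    coord e _ ((ofSeg k n ε e).arrow i u) =
      if InSupp n e (tgt (ε i) i) then coord e _ u else 0 := by
  have key (b : Bool) (hb : ε i = b) (u : (ofSeg k n ε e).V (src b i)) :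
      coord e _ ((ofSeg k n ε e).edgeMap i b u) =
        if InSupp n e (tgt b i) then coord e _ u else 0 := by
    cases b with
    | true =>
      have hfwd : (ofSeg k n ε e).fwd i = fiberMap k _ _ := if_pos hb
      simp only [edgeMap, hfwd]
      exact fiberMap_coe _ _ u
    | false =>
      have hbwd : (ofSeg k n ε e).bwd i = fiberMap k _ _ := if_neg (by simp [hb])
      simp only [edgeMap, hbwd]
      exact fiberMap_coe _ _ u
  exact key _ rfl u

theorem arrow_gen {i : ℕ} (hi : InSupp n e (src (ε i) i)) :
    (ofSeg k n ε e).arrow i (gen e _) = gen e _ :=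
  coord_injective _ _ (by rw [coord_arrow, coord_gen, coord_gen, if_pos hi])

/-- The morphism sending each basis vector `gen e x` to `v x`. -/
def homOfGen (v : ∀ x, X.V x)
    (hv : ∀ i, InSupp n e (src (ε i) i) →
      X.arrow i (v _) = if InSupp n e (tgt (ε i) i) then v _ else 0) :
    (ofSeg k n ε e).Hom X :=
  Hom.ofArrow (fun x => (coord e x).smulRight (v x)) fun i u => by
    simp only [LinearMap.smulRight_apply, map_smul, coord_arrow]
    by_cases hi : InSupp n e (src (ε i) i)
    · rw [hv i hi]
      split_ifs <;> simp
    · simp [coord_eq_zero hi]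

theorem coord_smul_app_gen (h : (ofSeg k n ε e).Hom X) (x : ℕ) (u : (ofSeg k n ε e).V x) :
    h.app x u = coord e x u • h.app x (gen e x) := by
  rw [← map_smul, coord_smul_gen]

/-- The morphism whose coordinates are the functionals `φ x`. -/
def homOfCoord (φ : ∀ x, X.V x →ₗ[k] k) (hφ₀ : ∀ x, ¬InSupp n e x → φ x = 0)
    (hφ : ∀ i, InSupp n e (tgt (ε i) i) → ∀ v, φ _ (X.arrow i v) = φ _ v) :
    X.Hom (ofSeg k n ε e) :=
  Hom.ofArrow (fun x => (φ x).smulRight (gen e x)) fun i v => by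
    apply coord_injective
    simp only [LinearMap.smulRight_apply, map_smul, coord_arrow, coord_gen]
    by_cases hs : InSupp n e (src (ε i) i) <;> by_cases ht : InSupp n e (tgt (ε i) i) <;>
      simp [hs, ht, hφ, hφ₀]

theorem coord_homOfCoord {φ : ∀ x, X.V x →ₗ[k] k} (hφ₀ : ∀ x, ¬InSupp n e x → φ x = 0)
    (hφ : ∀ i, InSupp n e (tgt (ε i) i) → ∀ v, φ _ (X.arrow i v) = φ _ v) (x : ℕ) (v : X.V x) :
    coord e x ((homOfCoord φ hφ₀ hφ).app x v) = φ x v := by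
  simp only [homOfCoord, Hom.ofArrow, LinearMap.smulRight_apply, map_smul, coord_gen]
  split_ifs with hx
  · simp
  · simp [hφ₀ x hx]

/-- `e` and `g` agree along every arrow that starts in `e` and ends in `g`, so that the identity
on the common support is a morphism from `ofSeg k n ε e` to `ofSeg k n ε g`. -/
def Compat (n : ℕ) (ε : ℕ → Bool) (e g : ℕ × ℕ) : Prop :=
  ∀ i, InSupp n e (src (ε i) i) → InSupp n g (tgt (ε i) i) →
    (InSupp n g (src (ε i) i) ↔ InSupp n e (tgt (ε i) i))

/-- The morphism which is the identity on the common support of two interval representations. -/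
def canHom (h : Compat n ε e g) : (ofSeg k n ε e).Hom (ofSeg k n ε g) :=
  homOfGen (fun x => gen g x) fun i hi => by
    apply coord_injective
    rw [coord_arrow, apply_ite (coord g _), coord_gen, coord_gen, map_zero]
    have := h i hi
    by_cases hg : InSupp n g (tgt (ε i) i) <;> simp_all

theorem coord_canHom (h : Compat n ε e g) (x : ℕ) (u : (ofSeg k n ε e).V x) :
    coord g x ((canHom h).app x u) = if InSupp n g x then coord e x u else 0 := by
  simp [canHom, homOfGen, Hom.ofArrow, coord_gen]

theorem compat_of_endpoints (he : e.2 ≤ n + 2) (hg : g.2 ≤ n + 2)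
    (left_in : g.1 < e.1 → ε e.1 = true) (left_out : e.1 < g.1 → ε g.1 = false)
    (right_out : e.2 < g.2 → ε e.2 = false) (right_in : g.2 < e.2 → ε g.2 = true) :
    Compat n ε e g := by
  intro i
  simp only [inSupp_iff he, inSupp_iff hg]
  cases hi : ε i <;> simp only [src, tgt, cond_true, cond_false] <;> grind

end ARep

/-! ### Decomposition into interval representations -/

theorem exists_dual_eq_one {V : Type} [AddCommGroup V] [Module k V] {W : Submodule k V} {v : V}
    (hv : v ∉ W) : ∃ ψ : V →ₗ[k] k, ψ v = 1 ∧ ∀ w ∈ W, ψ w = 0 := by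
  obtain ⟨ψ, hψW, hψv⟩ := LinearMap.exists_extend_of_notMem (0 : W →ₗ[k] k) hv 1
  exact ⟨ψ, hψv, fun w hw => LinearMap.congr_fun hψW ⟨w, hw⟩⟩

theorem exists_dual_extension {V V' : Type} [AddCommGroup V] [Module k V] [AddCommGroup V']
    [Module k V'] (α : V →ₗ[k] V') (W : Submodule k V') (φ : V →ₗ[k] k)
    (h : ∀ u, α u ∈ W → φ u = 0) :
    ∃ ψ : V' →ₗ[k] k, (∀ w ∈ W, ψ w = 0) ∧ ∀ u, ψ (α u) = φ u := by
  have hφ : φ ∈ (W.mkQ ∘ₗ α).ker.dualAnnihilator := by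
    rw [Submodule.mem_dualAnnihilator]
    exact fun u hu => h u (by simpa using hu)
  rw [← LinearMap.range_dualMap_eq_dualAnnihilator_ker] at hφ
  obtain ⟨χ, hχ⟩ := hφ
  exact ⟨χ ∘ₗ W.mkQ, fun w hw => by simp [(Submodule.Quotient.mk_eq_zero W).2 hw],
    LinearMap.congr_fun hχ⟩

namespace ARep

variable {X Y : ARep k n ε} {a m : ℕ} {v : ∀ x, X.V x} {φ : ∀ x, X.V x →ₗ[k] k}

/-- Vectors `v x` and functionals `φ x` on the interval `(a, m]` with `φ x (v x) = 1`, compatible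
with the arrows of `Q` to the left of `m`. For `m` the last vertex of the support of `X` they
define morphisms `M(a + 1, m) ⟶ X ⟶ M(a + 1, m)` with composite the identity. -/
structure Thread (X : ARep k n ε) (a m : ℕ) (v : ∀ x, X.V x) (φ : ∀ x, X.V x →ₗ[k] k) :
    Prop where
  vec_eq_zero : ∀ x, ¬(a < x ∧ x ≤ m) → v x = 0
  dual_eq_zero : ∀ x, ¬(a < x ∧ x ≤ m) → φ x = 0
  arrow_vec : ∀ l < m, a < src (ε l) l → X.arrow l (v _) = v _
  dual_arrow : ∀ l < m, a < tgt (ε l) l → ∀ u, φ _ (X.arrow l u) = φ _ u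
  pairing : ∀ x, a < x → x ≤ m → φ x (v x) = 1

theorem Thread.nil : Thread X m m (fun _ => 0) fun _ => 0 where
  vec_eq_zero _ _ := rfl
  dual_eq_zero _ _ := rfl
  arrow_vec _ _ _ := map_zero _
  dual_arrow _ _ _ _ := rfl
  pairing _ h h' := absurd h h'.not_gt

theorem src_le (b : Bool) (l : ℕ) : src b l ≤ l + 1 := by cases b <;> simp [src]

theorem tgt_le (b : Bool) (l : ℕ) : tgt b l ≤ l + 1 := by cases b <;> simp [tgt]

theorem Thread.extend (h : Thread X a m v φ) (ham : a ≤ m) (u : X.V (m + 1))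
    (ψ : X.V (m + 1) →ₗ[k] k) (hψu : ψ u = 1)
    (h_true : ε m = true →
      (a < m → X.fwd m (v m) = u) ∧ ∀ w, ψ (X.fwd m w) = φ m w)
    (h_false : ε m = false →
      X.bwd m u = v m ∧ (a < m → ∀ w, φ m (X.bwd m w) = ψ w)) :
    ∃ v' φ', Thread X a (m + 1) v' φ' ∧ v' (m + 1) = u ∧ φ' (m + 1) = ψ := by
  set v' := Function.update v (m + 1) u
  set φ' := Function.update φ (m + 1) ψ
  have hv_last : v' (m + 1) = u := Function.update_self ..
  have hφ_last : φ' (m + 1) = ψ := Function.update_self ..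
  have hv {x : ℕ} (hx : x ≠ m + 1) : v' x = v x := Function.update_of_ne hx ..
  have hφ {x : ℕ} (hx : x ≠ m + 1) : φ' x = φ x := Function.update_of_ne hx ..
  have arrow_last (b : Bool) (hb : ε m = b) :
      (a < src b m → X.edgeMap m b (v' _) = v' _) ∧
        (a < tgt b m → ∀ w, φ' _ (X.edgeMap m b w) = φ' _ w) := by
    cases b
    · simp only [src, tgt, edgeMap, cond_false, hv_last, hφ_last, hv m.succ_ne_self.symm,
        hφ m.succ_ne_self.symm]
      exact ⟨fun _ => (h_false hb).1, (h_false hb).2⟩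
    · simp only [src, tgt, edgeMap, cond_true, hv_last, hφ_last, hv m.succ_ne_self.symm,
        hφ m.succ_ne_self.symm]
      exact ⟨(h_true hb).1, fun _ => (h_true hb).2⟩
  refine ⟨v', φ', ⟨fun x hx => ?_, fun x hx => ?_, fun l hl => ?_, fun l hl => ?_,
    fun x hax hxm => ?_⟩, hv_last, hφ_last⟩
  · rw [hv (by omega), h.vec_eq_zero x (by omega)]
  · rw [hφ (by omega), h.dual_eq_zero x (by omega)]
  · obtain hlm | rfl := Nat.lt_succ_iff_lt_or_eq.1 hl
    · rw [hv (by grind [src_le]), hv (by grind [tgt_le])]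
      exact h.arrow_vec l hlm
    · exact (arrow_last _ rfl).1
  · obtain hlm | rfl := Nat.lt_succ_iff_lt_or_eq.1 hl
    · rw [hφ (by grind [tgt_le]), hφ (by grind [src_le])]
      exact h.dual_arrow l hlm
    · exact (arrow_last _ rfl).2
  · obtain hxm | rfl := Nat.le_succ_iff.1 hxm
    · rw [hv (by omega), hφ (by omega), h.pairing x hax hxm]
    · rw [hv_last, hφ_last, hψu]

/-- Some thread ends at `m` with a vector in `Z` and a functional that vanishes on `W`. -/
def Separates (X : ARep k n ε) (m : ℕ) (W Z : Submodule k (X.V m)) : Prop :=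
  ∃ a v φ, a < m ∧ Thread X a m v φ ∧ v m ∈ Z ∧ ∀ w ∈ W, φ m w = 0

theorem Thread.separates_succ (h : Thread X a m v φ) (ham : a ≤ m)
    {W Z : Submodule k (X.V (m + 1))} {u : X.V (m + 1)} {ψ : X.V (m + 1) →ₗ[k] k}
    (hu : u ∈ Z) (hψ : ∀ w ∈ W, ψ w = 0) (hψu : ψ u = 1)
    (h_true : ε m = true →
      (a < m → X.fwd m (v m) = u) ∧ ∀ w, ψ (X.fwd m w) = φ m w)
    (h_false : ε m = false →
      X.bwd m u = v m ∧ (a < m → ∀ w, φ m (X.bwd m w) = ψ w)) :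
    Separates X (m + 1) W Z := by
  obtain ⟨v', φ', h', rfl, rfl⟩ := h.extend ham u ψ hψu h_true h_false
  exact ⟨a, v', φ', by omega, h', hu, hψ⟩

theorem separates_succ_of_true (hm : ε m = true)
    (ih : ∀ W Z : Submodule k (X.V m), W ≤ Z → ¬Z ≤ W → Separates X m W Z)
    {W Z : Submodule k (X.V (m + 1))} (hWZ : W ≤ Z) (hZW : ¬Z ≤ W) :
    Separates X (m + 1) W Z := by
  by_cases hrange : ∀ u, X.fwd m u ∈ Z → X.fwd m u ∈ W
  · obtain ⟨z, hz, hzW⟩ := Set.not_subset.1 hZW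
    have hz_sup : z ∉ W ⊔ LinearMap.range (X.fwd m) := by
      intro hmem
      obtain ⟨w, hw, _, ⟨u, rfl⟩, rfl⟩ := Submodule.mem_sup.1 hmem
      exact hzW (W.add_mem hw (hrange u ((Z.add_mem_iff_right (hWZ hw)).1 hz)))
    obtain ⟨ψ, hψz, hψ⟩ := exists_dual_eq_one hz_sup
    exact Thread.nil.separates_succ le_rfl hz (fun w hw => hψ w (Submodule.mem_sup_left hw)) hψz
      (fun _ => ⟨fun h => absurd h (lt_irrefl m),
        fun w => hψ _ (Submodule.mem_sup_right ⟨w, rfl⟩)⟩) (by simp [hm])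
  · push Not at hrange
    obtain ⟨u, huZ, huW⟩ := hrange
    obtain ⟨a, v, φ, ham, hT, hvZ, hφ⟩ :=
      ih (W.comap (X.fwd m)) (Z.comap (X.fwd m)) (Submodule.comap_mono hWZ) fun h => huW (h huZ)
    obtain ⟨ψ, hψW, hψ⟩ := exists_dual_extension (X.fwd m) W (φ m) hφ
    exact hT.separates_succ ham.le hvZ hψW (by rw [hψ, hT.pairing m ham le_rfl])
      (fun _ => ⟨fun _ => rfl, hψ⟩) (by simp [hm])

theorem separates_succ_of_false (hm : ε m = false)
    (ih : ∀ W Z : Submodule k (X.V m), W ≤ Z → ¬Z ≤ W → Separates X m W Z)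
    {W Z : Submodule k (X.V (m + 1))} (hWZ : W ≤ Z) (hZW : ¬Z ≤ W) :
    Separates X (m + 1) W Z := by
  by_cases hker : ∀ u ∈ Z, X.bwd m u = 0 → u ∈ W
  · have hmap : ¬Z.map (X.bwd m) ≤ W.map (X.bwd m) := by
      refine fun h => hZW fun z hz => ?_
      obtain ⟨w, hw, hwz⟩ := h (Submodule.mem_map_of_mem hz)
      have hsub : z - w ∈ W :=
        hker _ (Z.sub_mem hz (hWZ hw)) (by rw [map_sub, hwz, sub_self])
      simpa using W.add_mem hsub hw
    obtain ⟨a, v, φ, ham, hT, ⟨z, hz, hzv⟩, hφ⟩ := ih _ _ (Submodule.map_mono hWZ) hmap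
    refine hT.separates_succ ham.le hz (ψ := (φ m).comp (X.bwd m))
      (fun w hw => hφ _ (Submodule.mem_map_of_mem hw)) ?_ (by simp [hm])
      fun _ => ⟨hzv, fun _ _ => rfl⟩
    rw [LinearMap.comp_apply, hzv, hT.pairing m ham le_rfl]
  · push Not at hker
    obtain ⟨u, huZ, hu, huW⟩ := hker
    obtain ⟨ψ, hψu, hψ⟩ := exists_dual_eq_one huW
    exact Thread.nil.separates_succ le_rfl huZ hψ hψu (by simp [hm])
      fun _ => ⟨hu, fun h => absurd h (lt_irrefl m)⟩

theorem separates_of_lt (X : ARep k n ε) (m : ℕ) :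
    ∀ W Z : Submodule k (X.V m), W ≤ Z → ¬Z ≤ W → Separates X m W Z := by
  induction m with
  | zero =>
    refine fun W Z _ hZW => absurd (fun z _ => ?_) hZW
    rw [X.triv 0 (Or.inl rfl) z]
    exact W.zero_mem
  | succ m ih =>
    intro W Z hWZ hZW
    cases hm : ε m with
    | true => exact separates_succ_of_true hm ih hWZ hZW
    | false => exact separates_succ_of_false hm ih hWZ hZW

theorem exists_last_vertex (hX : ¬X.IsZero) :
    ∃ m ≤ n + 2, (∃ u : X.V m, u ≠ 0) ∧ ∀ x, m < x → ∀ u : X.V x, u = 0 := by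
  have le_of_ne_zero (x : ℕ) (hx : ∃ u : X.V x, u ≠ 0) : x ≤ n + 2 := by
    obtain ⟨u, hu⟩ := hx
    by_contra h
    exact hu (X.triv x (Or.inr (by omega)) u)
  simp only [IsZero, not_forall] at hX
  obtain ⟨x, hx⟩ := hX
  have hm := Nat.findGreatest_spec (P := fun x => ∃ u : X.V x, u ≠ 0) (le_of_ne_zero x hx) hx
  refine ⟨_, le_of_ne_zero _ hm, hm, fun y hy u => by_contra fun hu => ?_⟩
  exact Nat.findGreatest_is_greatest hy (le_of_ne_zero y ⟨u, hu⟩) ⟨u, hu⟩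

theorem Thread.iso_dsum (hT : Thread X a m v φ) (ham : ValidPair n (a, m))
    (hm : ∀ x, m < x → ∀ u : X.V x, u = 0) :
    ∃ Y : ARep k n ε, X.Iso ((ofSeg k n ε (a, m)).dsum Y) := by
  have hsupp : ∀ x, InSupp n (a, m) x ↔ a < x ∧ x ≤ m := inSupp_iff ham.2
  have hsrc_tgt (l : ℕ) : src (ε l) l = l ∧ tgt (ε l) l = l + 1 ∨
      src (ε l) l = l + 1 ∧ tgt (ε l) l = l := by
    cases ε l <;> simp [src, tgt]
  let f : (ofSeg k n ε (a, m)).Hom X := homOfGen v fun l hl => by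
    rw [hsupp] at hl
    have := hsrc_tgt l
    split_ifs with ht
    · rw [hsupp] at ht
      exact hT.arrow_vec l (by omega) hl.1
    · rw [hsupp] at ht
      by_cases hlm : l < m
      · rw [hT.arrow_vec l hlm hl.1, hT.vec_eq_zero _ ht]
      · exact hm _ (by omega) _
  let g : X.Hom (ofSeg k n ε (a, m)) :=
    homOfCoord φ (fun x hx => hT.dual_eq_zero x ((hsupp x).not.1 hx)) fun l hl u => by
      rw [hsupp] at hl
      have := hsrc_tgt l
      by_cases hlm : l < m
      · exact hT.dual_arrow l hlm hl.1 u
      · rw [hm _ (by omega) u, map_zero, map_zero, map_zero]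
  refine ⟨ker g, iso_dsum_ker f g fun x u => coord_injective _ _ ?_⟩
  have hfx : f.app x u = coord (a, m) x u • v x := rfl
  rw [coord_homOfCoord, hfx, map_smul, smul_eq_mul]
  by_cases hx : InSupp n (a, m) x
  · rw [hT.pairing x ((hsupp x).1 hx).1 ((hsupp x).1 hx).2, mul_one]
  · rw [coord_eq_zero hx, zero_mul]

theorem exists_iso_ofSeg_dsum (hX : ¬X.IsZero) :
    ∃ e, ValidPair n e ∧ ∃ Y : ARep k n ε, X.Iso ((ofSeg k n ε e).dsum Y) := by
  obtain ⟨m, hmn, ⟨u, hu⟩, hm⟩ := exists_last_vertex hX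
  obtain ⟨a, v, φ, ham, hT, -, -⟩ := separates_of_lt X m ⊥ ⊤ bot_le fun h =>
    hu ((Submodule.mem_bot k).1 (h Submodule.mem_top))
  exact ⟨(a, m), ⟨ham, hmn⟩, hT.iso_dsum ⟨ham, hmn⟩ hm⟩

theorem inSupp_right {e : ℕ × ℕ} (he : ValidPair n e) : InSupp n e e.2 :=
  (inSupp_iff he.2 _).2 ⟨he.1, le_rfl⟩

theorem ofSeg_not_isZero {e : ℕ × ℕ} (he : ValidPair n e) : ¬(ofSeg k n ε e).IsZero :=
  fun h => gen_ne_zero (inSupp_right he) (h e.2 _)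

/-- The direct sum of the interval representations attached to a list of segments. -/
abbrev sumOfSegs (k : Type) [Field k] (n : ℕ) (ε : ℕ → Bool) (L : List (ℕ × ℕ)) : ARep k n ε :=
  dsumList k n ε (L.map (ofSeg k n ε))

/-- The total dimension of a representation. -/
def totalDim (X : ARep k n ε) : ℕ := ∑ x ∈ Finset.range (n + 3), Module.finrank k (X.V x)

theorem totalDim_dsum (X Y : ARep k n ε) : totalDim (X.dsum Y) = totalDim X + totalDim Y := by
  rw [totalDim, totalDim, totalDim, ← Finset.sum_add_distrib]
  exact Finset.sum_congr rfl fun x _ => Module.finrank_prod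

theorem totalDim_eq_of_iso (h : X.Iso Y) : totalDim X = totalDim Y := by
  obtain ⟨f, hf⟩ := h
  exact Finset.sum_congr rfl fun x _ => (LinearEquiv.ofBijective (f.app x) (hf x)).finrank_eq

theorem totalDim_pos (hX : ¬X.IsZero) : 0 < totalDim X := by
  obtain ⟨m, hmn, ⟨u, hu⟩, -⟩ := exists_last_vertex hX
  exact Finset.sum_pos' (fun _ _ => Nat.zero_le _)
    ⟨m, Finset.mem_range.2 (by omega), Module.finrank_pos_iff_exists_ne_zero.2 ⟨u, hu⟩⟩

theorem exists_iso_sumOfSegs (X : ARep k n ε) :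
    ∃ L : List (ℕ × ℕ), (∀ e ∈ L, ValidPair n e) ∧ X.Iso (sumOfSegs k n ε L) := by
  induction hd : totalDim X using Nat.strong_induction_on generalizing X with
  | _ d ih =>
    by_cases hX : X.IsZero
    · exact ⟨[], by simp, (Iso.dsum_zero zeroRep_isZero).symm.trans (Iso.zero_dsum hX)⟩
    · obtain ⟨e, he, Y, hY⟩ := exists_iso_ofSeg_dsum hX
      have hdim := totalDim_eq_of_iso hY
      rw [totalDim_dsum] at hdim
      have := totalDim_pos (ofSeg_not_isZero (k := k) (ε := ε) he)
      obtain ⟨L, hL, hYL⟩ := ih (totalDim Y) (by omega) Y rfl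
      exact ⟨e :: L, List.forall_mem_cons.2 ⟨he, hL⟩, hY.trans ((Iso.refl _).dsum hYL)⟩

end ARep

/-! ### Uniqueness of the decomposition -/

namespace ARep

variable {X Y : ARep k n ε} {e f : ℕ × ℕ}

/-- The scalar by which a morphism between interval representations acts at `x`, with respect to
the bases `gen e x` and `gen f x`. -/
def coeff (h : (ofSeg k n ε e).Hom (ofSeg k n ε f)) (x : ℕ) : k := coord f x (h.app x (gen e x))

theorem coeff_eq_zero_left (h : (ofSeg k n ε e).Hom (ofSeg k n ε f)) {x : ℕ}
    (hx : ¬InSupp n e x) : coeff h x = 0 := by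
  rw [coeff, gen_eq_zero hx, map_zero, map_zero]

theorem coeff_eq_zero_right (h : (ofSeg k n ε e).Hom (ofSeg k n ε f)) {x : ℕ}
    (hx : ¬InSupp n f x) : coeff h x = 0 :=
  coord_eq_zero hx _

theorem coord_app (h : (ofSeg k n ε e).Hom (ofSeg k n ε f)) (x : ℕ)
    (u : (ofSeg k n ε e).V x) : coord f x (h.app x u) = coeff h x * coord e x u := by
  rw [coord_smul_app_gen h, map_smul, smul_eq_mul, mul_comm, coeff]

theorem coeff_comp (p : (ofSeg k n ε e).Hom (ofSeg k n ε f))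
    (q : (ofSeg k n ε f).Hom (ofSeg k n ε e)) (x : ℕ) :
    coeff (q.comp p) x = coeff p x * coeff q x :=
  (coord_app q x _).trans (mul_comm _ _)

theorem coeff_tgt_eq_coeff_src (h : (ofSeg k n ε e).Hom (ofSeg k n ε f)) {i : ℕ}
    (hs : InSupp n e (src (ε i) i)) (ht : InSupp n f (tgt (ε i) i)) :
    coeff h (tgt (ε i) i) = coeff h (src (ε i) i) := by
  rw [coeff, ← arrow_gen hs, h.comm_arrow, coord_arrow, if_pos ht, coeff]

theorem coeff_eq_coeff_right (he : ValidPair n e) (h : (ofSeg k n ε e).Hom (ofSeg k n ε e))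
    {x : ℕ} (hx : InSupp n e x) : coeff h x = coeff h e.2 := by
  obtain ⟨hex, hxe⟩ := (inSupp_iff he.2 x).1 hx
  clear hx
  induction hxe using Nat.decreasingInduction with
  | self => rfl
  | of_succ i hie ih =>
    rw [← ih (by omega)]
    have hi : InSupp n e i := (inSupp_iff he.2 i).2 ⟨hex, hie.le⟩
    have hi' : InSupp n e (i + 1) := (inSupp_iff he.2 _).2 ⟨by omega, hie⟩
    have hstep := coeff_tgt_eq_coeff_src h (i := i)
    cases hb : ε i <;> simp only [hb, src, tgt, cond_true, cond_false] at hstep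
    exacts [hstep hi' hi, (hstep hi hi').symm]

theorem app_eq_coeff_smul (he : ValidPair n e) (h : (ofSeg k n ε e).Hom (ofSeg k n ε e)) {x : ℕ}
    (hx : InSupp n e x) (y : ℕ) (u : (ofSeg k n ε e).V y) : h.app y u = coeff h x • u := by
  apply coord_injective
  rw [coord_app, map_smul, smul_eq_mul]
  by_cases hy : InSupp n e y
  · rw [coeff_eq_coeff_right he h hx, coeff_eq_coeff_right he h hy]
  · rw [coord_eq_zero hy, mul_zero, mul_zero]

theorem exists_coeff_mul_eq_zero_of_edge (p : (ofSeg k n ε e).Hom (ofSeg k n ε f))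
    (q : (ofSeg k n ε f).Hom (ofSeg k n ε e)) {i : ℕ} (hs : InSupp n f (src (ε i) i))
    (ht : InSupp n f (tgt (ε i) i))
    (hi : ¬(InSupp n e (src (ε i) i) ↔ InSupp n e (tgt (ε i) i))) :
    ∃ x, InSupp n e x ∧ coeff p x * coeff q x = 0 := by
  by_cases hse : InSupp n e (src (ε i) i)
  · have hte : ¬InSupp n e (tgt (ε i) i) := fun hte => hi (iff_of_true hse hte)
    refine ⟨_, hse, ?_⟩
    rw [← coeff_tgt_eq_coeff_src p hse ht, coeff_eq_zero_left p hte, zero_mul]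
  · have hte : InSupp n e (tgt (ε i) i) := by_contra fun hte => hi (iff_of_false hse hte)
    refine ⟨_, hte, ?_⟩
    rw [coeff_tgt_eq_coeff_src q hs hte, coeff_eq_zero_right q hse, mul_zero]

theorem exists_coeff_mul_eq_zero (he : ValidPair n e) (hf : f.2 ≤ n + 2) (hef : e ≠ f)
    (p : (ofSeg k n ε e).Hom (ofSeg k n ε f)) (q : (ofSeg k n ε f).Hom (ofSeg k n ε e)) :
    ∃ x, InSupp n e x ∧ coeff p x * coeff q x = 0 := by
  by_cases hsub : ∀ x, InSupp n e x → InSupp n f x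
  · suffices ∃ i, InSupp n f i ∧ InSupp n f (i + 1) ∧ ¬(InSupp n e i ↔ InSupp n e (i + 1)) by
      obtain ⟨i, hi, hi', hne⟩ := this
      apply exists_coeff_mul_eq_zero_of_edge p q (i := i) <;>
        cases ε i <;> simp only [src, tgt, cond_true, cond_false] <;> tauto
    simp only [inSupp_iff he.2, inSupp_iff hf] at hsub ⊢
    have := he.1
    have := hsub (e.1 + 1)
    have := hsub e.2
    obtain hlt | hge := lt_or_ge f.1 e.1
    · exact ⟨e.1, by omega⟩
    · have : e.2 ≠ f.2 := fun h => hef (Prod.ext (by omega) h)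
      exact ⟨e.2, by omega⟩
  · push Not at hsub
    obtain ⟨x, hxe, hxf⟩ := hsub
    exact ⟨x, hxe, by rw [coeff_eq_zero_right p hxf, zero_mul]⟩

theorem comp_app_eq_zero (he : ValidPair n e) (hf : f.2 ≤ n + 2) (hef : e ≠ f)
    (p : (ofSeg k n ε e).Hom (ofSeg k n ε f)) (q : (ofSeg k n ε f).Hom (ofSeg k n ε e)) (x : ℕ)
    (u : (ofSeg k n ε e).V x) : q.app x (p.app x u) = 0 := by
  obtain ⟨y, hy, hpq⟩ := exists_coeff_mul_eq_zero he hf hef p q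
  have hcomp := app_eq_coeff_smul he (q.comp p) hy x u
  rwa [coeff_comp, hpq, zero_smul] at hcomp

theorem ofSeg_indec (he : ValidPair n e) : (ofSeg k n ε e).Indec := by
  refine ⟨ofSeg_not_isZero he, fun A B ⟨φ, hφ⟩ => ?_⟩
  obtain ⟨ψ, -, hφψ⟩ := φ.exists_inverse hφ
  let h := ψ.comp ((inl A B).comp ((fst A B).comp φ))
  have hh : ∀ x w, h.app x (ψ.app x w) = ψ.app x ((inl A B).app x w.1) := fun x w => by
    simp only [h, Hom.comp, LinearMap.comp_apply, hφψ]
    rfl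
  have hscalar : ∀ x w, ψ.app x ((inl A B).app x w.1) = coeff h e.2 • ψ.app x w := fun x w => by
    rw [← hh, app_eq_coeff_smul he h (inSupp_right he)]
  have ψ_eq_zero (x : ℕ) (w : (A.dsum B).V x) (hw : ψ.app x w = 0) : w = 0 := by
    rw [← hφψ x w, hw, map_zero]
  by_cases hc : coeff h e.2 = 0
  · refine Or.inl fun x v => congrArg Prod.fst (ψ_eq_zero x ((inl A B).app x v) ?_)
    exact (hscalar x ((inl A B).app x v)).trans (by rw [hc, zero_smul])
  · refine Or.inr fun x v => congrArg Prod.snd (ψ_eq_zero x ((inr A B).app x v) ?_)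
    refine (smul_eq_zero.1 ((hscalar x _).symm.trans ?_)).resolve_left hc
    exact (congrArg _ (map_zero _)).trans (map_zero _)

theorem Indec.exists_iso_ofSeg (hX : X.Indec) : ∃ e, ValidPair n e ∧ X.Iso (ofSeg k n ε e) := by
  obtain ⟨e, he, Y, hY⟩ := exists_iso_ofSeg_dsum hX.1
  exact ⟨e, he, hY.trans (Iso.dsum_zero ((hX.2 _ _ hY).resolve_left (ofSeg_not_isZero he)))⟩

/-- The values at `gen e e.2` of the morphisms from `ofSeg k n ε e` to `X`. -/
def homValues (e : ℕ × ℕ) (X : ARep k n ε) : Submodule k (X.V e.2) where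
  carrier := {u | ∃ f : (ofSeg k n ε e).Hom X, f.app e.2 (gen e e.2) = u}
  add_mem' := by
    rintro _ _ ⟨f, rfl⟩ ⟨g, rfl⟩
    exact ⟨f.add g, rfl⟩
  zero_mem' := ⟨Hom.zero _ _, rfl⟩
  smul_mem' := by
    rintro c _ ⟨f, rfl⟩
    exact ⟨f.smul c, rfl⟩

/-- The vectors of `X` at the vertex `e.2` killed by all morphisms from `X` to `ofSeg k n ε e`. -/
def homKer (e : ℕ × ℕ) (X : ARep k n ε) : Submodule k (X.V e.2) :=
  ⨅ g : X.Hom (ofSeg k n ε e), LinearMap.ker (g.app e.2)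

theorem mem_homKer {u : X.V e.2} :
    u ∈ homKer e X ↔ ∀ g : X.Hom (ofSeg k n ε e), g.app e.2 u = 0 := by
  simp [homKer]

/-- The multiplicity of `ofSeg k n ε e` in a decomposition of `X` into interval representations. -/
def mult (e : ℕ × ℕ) (X : ARep k n ε) : ℕ :=
  Module.finrank k (homValues e X) - Module.finrank k ↥(homValues e X ⊓ homKer e X)

theorem mult_eq_of_iso (h : X.Iso Y) (e : ℕ × ℕ) : mult e X = mult e Y := by
  obtain ⟨φ, hφ⟩ := h
  obtain ⟨ψ, hψφ, -⟩ := φ.exists_inverse hφ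
  let E : X.V e.2 ≃ₗ[k] Y.V e.2 := LinearEquiv.ofBijective (φ.app e.2) (hφ e.2)
  have values_iff (u : X.V e.2) : u ∈ homValues e X ↔ E u ∈ homValues e Y := by
    refine ⟨fun ⟨f, hf⟩ => ⟨φ.comp f, congrArg E hf⟩, fun ⟨f, hf⟩ => ⟨ψ.comp f, ?_⟩⟩
    exact (congrArg (ψ.app e.2) hf).trans (hψφ _ u)
  have ker_iff (u : X.V e.2) : u ∈ homKer e X ↔ E u ∈ homKer e Y := by
    simp only [mem_homKer]
    refine ⟨fun hu g => hu (g.comp φ), fun hu g => ?_⟩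
    exact (congrArg (g.app e.2) (hψφ _ u)).symm.trans (hu (g.comp ψ))
  have values_eq : homValues e X = (homValues e Y).comap (E : X.V e.2 →ₗ[k] Y.V e.2) :=
    Submodule.ext values_iff
  have ker_eq : homKer e X = (homKer e Y).comap (E : X.V e.2 →ₗ[k] Y.V e.2) :=
    Submodule.ext ker_iff
  rw [mult, mult, values_eq, ker_eq, ← Submodule.comap_inf,
    (E.ofSubmodule' _).finrank_eq, (E.ofSubmodule' _).finrank_eq]

theorem homValues_dsum (e : ℕ × ℕ) (X Y : ARep k n ε) :
    homValues e (X.dsum Y) = (homValues e X).prod (homValues e Y) := by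
  apply le_antisymm
  · rintro _ ⟨f, rfl⟩
    exact ⟨⟨(fst X Y).comp f, rfl⟩, ⟨(snd X Y).comp f, rfl⟩⟩
  · rintro ⟨_, _⟩ ⟨⟨f, rfl⟩, ⟨g, rfl⟩⟩
    exact ⟨f.prod g, rfl⟩

theorem finrank_submodule_prod {V V' : Type} [AddCommGroup V] [Module k V] [FiniteDimensional k V]
    [AddCommGroup V'] [Module k V'] [FiniteDimensional k V'] (A : Submodule k V)
    (B : Submodule k V') :
    Module.finrank k (A.prod B) = Module.finrank k A + Module.finrank k B := by
  have hrange : LinearMap.range (A.subtype.prodMap B.subtype) = A.prod B := by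
    rw [LinearMap.range_prodMap, A.range_subtype, B.range_subtype]
  rw [← hrange, LinearMap.finrank_range_of_inj, Module.finrank_prod]
  exact A.subtype_injective.prodMap B.subtype_injective

theorem homKer_dsum (e : ℕ × ℕ) (X Y : ARep k n ε) :
    homKer e (X.dsum Y) = (homKer e X).prod (homKer e Y) := by
  refine Submodule.ext fun w => Iff.trans mem_homKer <| Iff.trans ?_ <|
    Iff.symm (and_congr mem_homKer mem_homKer)
  refine ⟨fun h => ⟨fun g => h (g.comp (fst X Y)), fun g => h (g.comp (snd X Y))⟩,
    fun ⟨hX, hY⟩ g => ?_⟩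
  have hw : w = (inl X Y).app e.2 w.1 + (inr X Y).app e.2 w.2 :=
    Prod.ext (add_zero _).symm (zero_add _).symm
  rw [hw, map_add]
  exact (congrArg₂ _ (hX (g.comp (inl X Y))) (hY (g.comp (inr X Y)))).trans (add_zero 0)

theorem mult_dsum (e : ℕ × ℕ) (X Y : ARep k n ε) :
    mult e (X.dsum Y) = mult e X + mult e Y := by
  have hval : Module.finrank k (homValues e (X.dsum Y)) =
      Module.finrank k (homValues e X) + Module.finrank k (homValues e Y) := by
    rw [homValues_dsum]
    exact finrank_submodule_prod _ _
  have hinf : homValues e (X.dsum Y) ⊓ homKer e (X.dsum Y) =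
      (homValues e X ⊓ homKer e X).prod (homValues e Y ⊓ homKer e Y) :=
    (congrArg₂ _ (homValues_dsum e X Y) (homKer_dsum e X Y)).trans (Submodule.prod_inf_prod ..)
  have hker : Module.finrank k ↥(homValues e (X.dsum Y) ⊓ homKer e (X.dsum Y)) =
      Module.finrank k ↥(homValues e X ⊓ homKer e X) +
        Module.finrank k ↥(homValues e Y ⊓ homKer e Y) := by
    rw [hinf]
    exact finrank_submodule_prod _ _
  have hX := Submodule.finrank_mono (inf_le_left : homValues e X ⊓ homKer e X ≤ _)
  have hY := Submodule.finrank_mono (inf_le_left : homValues e Y ⊓ homKer e Y ≤ _)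
  rw [mult, mult, mult, hval, hker]
  omega

theorem mult_eq_zero (hX : X.IsZero) (e : ℕ × ℕ) : mult e X = 0 := by
  have hdouble := mult_eq_of_iso (Iso.zero_dsum hX (N := X)) e
  rw [mult_dsum] at hdouble
  omega

theorem mult_self (he : ValidPair n e) : mult e (ofSeg k n ε e) = 1 := by
  have hval : homValues e (ofSeg k n ε e) = ⊤ := eq_top_iff.2 fun u _ => by
    rw [← coord_smul_gen e e.2 u]
    exact Submodule.smul_mem _ _ ⟨Hom.id _, rfl⟩
  have hker : homKer e (ofSeg k n ε e) = ⊥ :=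
    eq_bot_iff.2 fun u hu => (Submodule.mem_bot k).2 (mem_homKer.1 hu (Hom.id _))
  have hdim : Module.finrank k ((ofSeg k n ε e).V e.2) = 1 :=
    finrank_eq_one (gen e e.2) (gen_ne_zero (inSupp_right he)) fun u =>
      ⟨_, coord_smul_gen e e.2 u⟩
  rw [mult, hval, hker, inf_bot_eq, finrank_top, finrank_bot, hdim]

theorem mult_of_ne (he : ValidPair n e) (hf : ValidPair n f) (hef : e ≠ f) :
    mult e (ofSeg k n ε f) = 0 := by
  have hle : homValues e (ofSeg k n ε f) ≤ homKer e (ofSeg k n ε f) := by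
    rintro _ ⟨p, rfl⟩
    exact mem_homKer.2 fun q => comp_app_eq_zero he hf.2 hef p q _ _
  rw [mult, inf_eq_left.2 hle, Nat.sub_self]

theorem mult_sumOfSegs (he : ValidPair n e) (L : List (ℕ × ℕ)) (hL : ∀ f ∈ L, ValidPair n f) :
    mult e (sumOfSegs k n ε L) = L.count e := by
  induction L with
  | nil => exact mult_eq_zero zeroRep_isZero e
  | cons f L ih =>
    obtain ⟨hf, hL⟩ := List.forall_mem_cons.1 hL
    refine (mult_dsum e (ofSeg k n ε f) (sumOfSegs k n ε L)).trans ?_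
    rw [ih hL, List.count_cons, add_comm]
    obtain rfl | hfe := eq_or_ne f e
    · rw [mult_self hf, if_pos (beq_self_eq_true _)]
    · rw [mult_of_ne he hf hfe.symm, if_neg (by simpa using hfe)]

theorem sumOfSegs_iso_of_perm {L L' : List (ℕ × ℕ)} (h : L.Perm L') :
    (sumOfSegs k n ε L).Iso (sumOfSegs k n ε L') := by
  induction h with
  | nil => exact .refl _
  | cons e _ ih => exact (Iso.refl (ofSeg k n ε e)).dsum ih
  | swap e f L =>
    exact ((Iso.dsum_assoc (ofSeg k n ε f) (ofSeg k n ε e) (sumOfSegs k n ε L)).symm.trans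
      ((Iso.dsum_comm (ofSeg k n ε f) (ofSeg k n ε e)).dsum (.refl _))).trans
        (Iso.dsum_assoc _ _ _)
  | trans _ _ ih ih' => exact ih.trans ih'

theorem sumOfSegs_append (L L' : List (ℕ × ℕ)) :
    (sumOfSegs k n ε (L ++ L')).Iso ((sumOfSegs k n ε L).dsum (sumOfSegs k n ε L')) := by
  induction L with
  | nil => exact (Iso.zero_dsum zeroRep_isZero).symm
  | cons e L ih =>
    exact ((Iso.refl (ofSeg k n ε e)).dsum ih).trans (Iso.dsum_assoc _ _ _).symm

theorem perm_of_sumOfSegs_iso {L L' : List (ℕ × ℕ)} (hL : ∀ f ∈ L, ValidPair n f)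
    (hL' : ∀ f ∈ L', ValidPair n f) (h : (sumOfSegs k n ε L).Iso (sumOfSegs k n ε L')) :
    L.Perm L' := by
  rw [List.perm_iff_count]
  intro e
  by_cases he : ValidPair n e
  · rw [← mult_sumOfSegs (k := k) (ε := ε) he L hL, ← mult_sumOfSegs (k := k) (ε := ε) he L' hL',
      mult_eq_of_iso h]
  · rw [List.count_eq_zero_of_not_mem fun h => he (hL e h),
      List.count_eq_zero_of_not_mem fun h => he (hL' e h)]

end ARep

/-! ### Extensions of interval representations -/

open ARep

/-- Transport of a short exact sequence along isomorphisms of its end terms. -/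
def SES.congr {A B A' B' : ARep k n ε} (σ : SES B A) (β : B'.Hom B) (α : A.Hom A')
    (hβ : ∀ x, Function.Bijective (β.app x)) (hα : ∀ x, Function.Bijective (α.app x)) :
    SES B' A' where
  E := σ.E
  ι := σ.ι.comp β
  π := α.comp σ.π
  inj x := (σ.inj x).comp (hβ x).1
  surj x := (hα x).2.comp (σ.surj x)
  exct x v := by
    change α.app x (σ.π.app x v) = 0 ↔ ∃ u, σ.ι.app x (β.app x u) = v
    rw [map_eq_zero_iff _ (hα x).1, σ.exct, (hβ x).2.exists]

section

variable {A B A' B' : ARep k n ε}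

theorem SES.π_app_ι (σ : SES B A) (x : ℕ) (v : B.V x) : σ.π.app x (σ.ι.app x v) = 0 :=
  (σ.exct x _).2 ⟨v, rfl⟩

theorem SES.splits_of_congr {σ : SES B A} {β : B'.Hom B} {α : A.Hom A'}
    {hβ : ∀ x, Function.Bijective (β.app x)} {hα : ∀ x, Function.Bijective (α.app x)}
    (h : (σ.congr β α hβ hα).Splits) : σ.Splits := by
  obtain ⟨r, hr⟩ := h
  refine ⟨β.comp r, fun x => (hβ x).2.forall.2 fun v => ?_⟩
  exact congrArg (β.app x) (hr x v)

theorem ExtZero.of_iso (h : ExtZero A B) (hA : A.Iso A') (hB : B.Iso B') : ExtZero A' B' := by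
  obtain ⟨β, hβ⟩ := hB
  obtain ⟨α, hα⟩ := hA.symm
  exact fun σ => SES.splits_of_congr (h (σ.congr β α hβ hα))

theorem ExtOneDimIndecMid.of_iso (h : ExtOneDimIndecMid A B) (hA : A.Iso A') (hB : B.Iso B') :
    ExtOneDimIndecMid A' B' := by
  obtain ⟨β, hβ⟩ := hB
  obtain ⟨α, hα⟩ := hA
  obtain ⟨β', hβ'β, hββ'⟩ := β.exists_inverse hβ
  obtain ⟨α', hα'α, hαα'⟩ := α.exists_inverse hα
  have hβ' (x) : Function.Bijective (β'.app x) :=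
    Function.bijective_iff_has_inverse.2 ⟨β.app x, hββ' x, hβ'β x⟩
  have hα' (x) : Function.Bijective (α'.app x) :=
    Function.bijective_iff_has_inverse.2 ⟨α.app x, hαα' x, hα'α x⟩
  obtain ⟨σ, hσ, hE, hgen⟩ := h
  refine ⟨σ.congr β' α hβ' hα, fun hs => hσ (SES.splits_of_congr hs), hE, fun τ hτ => ?_⟩
  obtain ⟨c, hc, φ, hφ, hφι, hπφ⟩ :=
    hgen (τ.congr β α' hβ hα') fun hs => hτ (SES.splits_of_congr hs)
  refine ⟨c, hc, φ, hφ, fun x v => ?_, fun x v => ?_⟩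
  · exact (hφι x (β'.app x v)).trans (congrArg (τ.ι.app x) (hββ' x v))
  · have hv : α'.app x (τ.π.app x (φ.app x v)) = c • σ.π.app x v := hπφ x v
    change τ.π.app x (φ.app x v) = c • α.app x (σ.π.app x v)
    rw [← map_smul, ← hv, hαα']

-- The five lemma, with the identity on the left and multiplication by `c` on the right.
theorem SES.bijective_of_comparison {σ τ : SES B A} {φ : σ.E.Hom τ.E} {c : k} (hc : c ≠ 0)
    (hφι : ∀ x v, φ.app x (σ.ι.app x v) = τ.ι.app x v)
    (hπφ : ∀ x v, τ.π.app x (φ.app x v) = c • σ.π.app x v) (x : ℕ) :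
    Function.Bijective (φ.app x) := by
  constructor
  · refine (injective_iff_map_eq_zero (φ.app x)).2 fun v hv => ?_
    have hcv := hπφ x v
    rw [hv, map_zero, eq_comm, smul_eq_zero_iff_right hc, σ.exct] at hcv
    obtain ⟨u, rfl⟩ := hcv
    rw [hφι, map_eq_zero_iff _ (τ.inj x)] at hv
    rw [hv, map_zero]
  · intro w
    obtain ⟨v, hv⟩ := σ.surj x (c⁻¹ • τ.π.app x w)
    have hw : τ.π.app x (w - φ.app x v) = 0 := by
      rw [map_sub, hπφ, hv, smul_inv_smul₀ hc, sub_self]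
    obtain ⟨u, hu⟩ := (τ.exct x _).1 hw
    exact ⟨v + σ.ι.app x u, by rw [map_add, hφι, hu, add_sub_cancel]⟩

/-- The split extension `0 → B → B ⊕ A → A → 0`. -/
def SES.split (B A : ARep k n ε) : SES B A where
  E := B.dsum A
  ι := inl B A
  π := snd B A
  inj _ _ _ h := congrArg Prod.fst h
  surj _ u := ⟨(0, u), rfl⟩
  exct _ v := ⟨fun h => ⟨v.1, Prod.ext rfl h.symm⟩, by rintro ⟨u, rfl⟩; rfl⟩

theorem SES.splits_of_section (σ : SES B A) (s : A.Hom σ.E)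
    (hs : ∀ x u, σ.π.app x (s.app x u) = u) : σ.Splits := by
  let φ : (SES.split B A).E.Hom σ.E := σ.ι.coprod s
  have hφι (x) (v : B.V x) : φ.app x ((inl B A).app x v) = σ.ι.app x v := by
    change σ.ι.app x v + s.app x 0 = _
    rw [map_zero, add_zero]
  have hπφ (x) (v : (B.dsum A).V x) : σ.π.app x (φ.app x v) = (1 : k) • (snd B A).app x v := by
    change σ.π.app x (σ.ι.app x v.1 + s.app x v.2) = (1 : k) • v.2
    rw [map_add, hs, σ.π_app_ι, zero_add, one_smul]
  obtain ⟨ψ, hψφ, -⟩ := φ.exists_inverse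
    (SES.bijective_of_comparison (σ := SES.split B A) one_ne_zero hφι hπφ)
  refine ⟨(fst B A).comp ψ, fun x v => ?_⟩
  rw [← hφι]
  exact congrArg Prod.fst (hψφ x _)

end

section

variable {e f : ℕ × ℕ}

/-- The arrow of `Q` between `i` and `i + 1` leads from the support of `ofSeg k n ε f` to that of
`ofSeg k n ε e`. The extensions of the former by the latter are scalars on these arrows, modulo
coboundaries. -/
def IsLink (n : ℕ) (ε : ℕ → Bool) (e f : ℕ × ℕ) (i : ℕ) : Prop :=
  InSupp n f (src (ε i) i) ∧ InSupp n e (tgt (ε i) i)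

/-- Lifts `w x` of the basis vectors of `ofSeg k n ε f` to the middle term of an extension, with
the scalars `δ i` by which the arrows of `Q` move them off the lifts. -/
structure SES.Cocycle (σ : SES (ofSeg k n ε e) (ofSeg k n ε f)) (w : ∀ x, σ.E.V x) (δ : ℕ → k) :
    Prop where
  lift x : σ.π.app x (w x) = gen f x
  zero x : ¬InSupp n f x → w x = 0
  arrow i : InSupp n f (src (ε i) i) →
    σ.E.arrow i (w _) = w (tgt (ε i) i) + δ i • σ.ι.app _ (gen e _)

theorem SES.exists_cocycle (σ : SES (ofSeg k n ε e) (ofSeg k n ε f)) :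
    ∃ w δ, σ.Cocycle w δ := by
  choose w₀ hw₀ using fun x => σ.surj x (gen f x)
  let w (x : ℕ) : σ.E.V x := if InSupp n f x then w₀ x else 0
  have hw (x : ℕ) : σ.π.app x (w x) = gen f x := by
    by_cases hx : InSupp n f x
    · simp only [w, if_pos hx, hw₀]
    · simp only [w, if_neg hx, map_zero, gen_eq_zero hx]
  have exists_defect (i : ℕ) : ∃ d : k, InSupp n f (src (ε i) i) →
      σ.E.arrow i (w _) = w (tgt (ε i) i) + d • σ.ι.app _ (gen e _) := by
    by_cases hi : InSupp n f (src (ε i) i)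
    · have hker : σ.π.app _ (σ.E.arrow i (w _) - w _) = 0 := by
        rw [map_sub, σ.π.comm_arrow, hw, hw, arrow_gen hi, sub_self]
      obtain ⟨u, hu⟩ := (σ.exct _ _).1 hker
      exact ⟨coord e _ u, fun _ => by rw [← map_smul, coord_smul_gen, hu, add_sub_cancel]⟩
    · exact ⟨0, fun h => absurd h hi⟩
  choose δ hδ using exists_defect
  exact ⟨w, δ, hw, fun x hx => if_neg hx, hδ⟩

theorem app_gen_eq_zero {X : ARep k n ε} (p : (ofSeg k n ε e).Hom X) {x : ℕ}
    (hx : ¬InSupp n e x) : p.app x (gen e x) = 0 := by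
  rw [gen_eq_zero hx, map_zero]

section Cocycle

variable {σ τ : SES (ofSeg k n ε e) (ofSeg k n ε f)} {w : ∀ x, σ.E.V x} {w' : ∀ x, τ.E.V x}
  {δ δ' : ℕ → k}

theorem SES.Cocycle.splits (P : σ.Cocycle w δ) (β : ℕ → k) (he : ∀ x, ¬InSupp n e x → β x = 0)
    (hf : ∀ x, ¬InSupp n f x → β x = 0)
    (hβ : ∀ i, IsLink n ε e f i → δ i + β (src (ε i) i) = β (tgt (ε i) i)) : σ.Splits := by
  have smul_arrow (i : ℕ) : β (src (ε i) i) • (ofSeg k n ε e).arrow i (gen e _) =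
      β (src (ε i) i) • gen e _ := by
    by_cases hi : InSupp n e (src (ε i) i)
    · rw [arrow_gen hi]
    · rw [he _ hi, zero_smul, zero_smul]
  let s : (ofSeg k n ε f).Hom σ.E := homOfGen (fun x => w x + β x • σ.ι.app x (gen e x)) <| by
    intro i hi
    have off (x : ℕ) (hx : ¬InSupp n f x) : w x + β x • σ.ι.app x (gen e x) = 0 := by
      rw [P.zero x hx, hf x hx, zero_smul, add_zero]
    rw [ite_eq_left_iff.2 fun hx => (off _ hx).symm, map_add, map_smul, P.arrow i hi,
      ← σ.ι.comm_arrow, ← map_smul (σ.ι.app _) (β _), smul_arrow, map_smul, add_assoc, ← add_smul]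
    by_cases ht : InSupp n e (tgt (ε i) i)
    · rw [hβ i ⟨hi, ht⟩]
    · rw [app_gen_eq_zero _ ht, smul_zero, smul_zero]
  refine σ.splits_of_section s fun x u => ?_
  change σ.π.app x (coord f x u • (w x + β x • σ.ι.app x (gen e x))) = u
  rw [map_smul, map_add, map_smul, P.lift, σ.π_app_ι, smul_zero, add_zero, coord_smul_gen]

theorem SES.Cocycle.exists_eq (P : σ.Cocycle w δ) (x : ℕ) (v : σ.E.V x) :
    ∃ u, ∃ a : k, v = σ.ι.app x u + a • w x := by
  have hker : σ.π.app x (v - coord f x (σ.π.app x v) • w x) = 0 := by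
    rw [map_sub, map_smul, P.lift, coord_smul_gen, sub_self]
  obtain ⟨u, hu⟩ := (σ.exct x _).1 hker
  exact ⟨u, _, by rw [hu, sub_add_cancel]⟩

theorem SES.Cocycle.exists_linearMap (P : σ.Cocycle w δ) (P' : τ.Cocycle w' δ') (c : k) :
    ∃ φ : ∀ x, σ.E.V x →ₗ[k] τ.E.V x, ∀ x u a,
      φ x (σ.ι.app x u + a • w x) = τ.ι.app x u + (c * a) • w' x := by
  choose r hr using fun x => (σ.ι.app x).exists_leftInverse_of_injective
    (LinearMap.ker_eq_bot.2 (σ.inj x))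
  have hr (x u) : r x (σ.ι.app x u) = u := LinearMap.congr_fun (hr x) u
  let t (x : ℕ) : σ.E.V x →ₗ[k] k := (coord f x).comp (σ.π.app x)
  refine ⟨fun x => (τ.ι.app x).comp ((r x).comp (LinearMap.id - (t x).smulRight (w x))) +
    (c • t x).smulRight (w' x), fun x u a => ?_⟩
  by_cases hx : InSupp n f x
  · have ht : t x (σ.ι.app x u + a • w x) = a := by
      simp [t, σ.π_app_ι, P.lift, coord_gen, hx]
    simp only [LinearMap.add_apply, LinearMap.comp_apply, LinearMap.sub_apply,
      LinearMap.id_apply, LinearMap.smulRight_apply, LinearMap.smul_apply, ht, smul_eq_mul,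
      add_sub_cancel_right, hr]
  · simp [t, P.zero x hx, P'.zero x hx, hr]

theorem SES.Cocycle.exists_comparison (P : σ.Cocycle w δ) (P' : τ.Cocycle w' δ') {c : k}
    (hδ : ∀ i, IsLink n ε e f i → δ i = c * δ' i) :
    ∃ φ : σ.E.Hom τ.E, (∀ x v, φ.app x (σ.ι.app x v) = τ.ι.app x v) ∧
      ∀ x v, τ.π.app x (φ.app x v) = c • σ.π.app x v := by
  obtain ⟨φ, φ_apply⟩ := P.exists_linearMap P' c
  refine ⟨Hom.ofArrow φ fun i v => ?_, fun x u => ?_, fun x v => ?_⟩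
  · obtain ⟨u, a, rfl⟩ := P.exists_eq _ v
    rw [φ_apply, map_add (σ.E.arrow i), map_smul (σ.E.arrow i), map_add (τ.E.arrow i),
      map_smul (τ.E.arrow i), ← σ.ι.comm_arrow, ← τ.ι.comm_arrow]
    by_cases hi : InSupp n f (src (ε i) i)
    · have hσ : σ.ι.app _ ((ofSeg k n ε e).arrow i u) + a • σ.E.arrow i (w _) =
          σ.ι.app _ ((ofSeg k n ε e).arrow i u + (a * δ i) • gen e _) + a • w _ := by
        rw [P.arrow i hi, map_add, map_smul, smul_add, smul_smul]
        abel
      rw [hσ, φ_apply, P'.arrow i hi, map_add, map_smul, smul_add, smul_smul]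
      by_cases ht : InSupp n e (tgt (ε i) i)
      · rw [hδ i ⟨hi, ht⟩, mul_left_comm, ← mul_assoc]
        abel
      · rw [app_gen_eq_zero _ ht, smul_zero, smul_zero, add_zero, add_zero]
    · rw [P.zero _ hi, P'.zero _ hi, map_zero, map_zero, smul_zero, smul_zero, add_zero]
      simpa using φ_apply _ ((ofSeg k n ε e).arrow i u) 0
  · change φ x _ = _
    simpa using φ_apply x u 0
  · obtain ⟨u, a, rfl⟩ := P.exists_eq x v
    change τ.π.app x (φ x _) = _
    rw [φ_apply, map_add, map_add, map_smul, map_smul, P.lift, P'.lift, σ.π_app_ι, τ.π_app_ι,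
      zero_add, zero_add, smul_smul]

end Cocycle

end

/-- At the left end of their overlap `γ(e)` is below `γ(f)`. -/
def LeftLt (ε : ℕ → Bool) (e f : ℕ × ℕ) : Prop :=
  (e.1 < f.1 ∧ ε f.1 = true) ∨ (f.1 < e.1 ∧ ε e.1 = false)

/-- At the right end of their overlap `γ(e)` is below `γ(f)`. -/
def RightLt (ε : ℕ → Bool) (e f : ℕ × ℕ) : Prop :=
  (e.2 < f.2 ∧ ε e.2 = false) ∨ (f.2 < e.2 ∧ ε f.2 = true)

/-- The combinatorial form of `Ext¹(M(f), M(e)) ≠ 0`: the segments `γ(e)` and `γ(f)` cross with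
`γ(f)` the steeper one, or they only meet in an endpoint, one continuing the other. -/
def HasExt (ε : ℕ → Bool) (e f : ℕ × ℕ) : Prop :=
  max e.1 f.1 ≤ min e.2 f.2 ∧ LeftLt ε f e ∧ RightLt ε e f

/-- The combinatorial form of "`γ(e)` and `γ(f)` cross and `γ(f)` is the steeper one". -/
def CrossUp (ε : ℕ → Bool) (e f : ℕ × ℕ) : Prop :=
  max e.1 f.1 < min e.2 f.2 ∧ LeftLt ε f e ∧ RightLt ε e f

section

variable {e f g h : ℕ × ℕ}

theorem LeftLt.ne (h : LeftLt ε e f) : e.1 ≠ f.1 := by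
  unfold LeftLt at h
  omega

theorem RightLt.ne (h : RightLt ε e f) : e.2 ≠ f.2 := by
  unfold RightLt at h
  omega

theorem IsLink.bounds (he : e.2 ≤ n + 2) (hf : f.2 ≤ n + 2) {i : ℕ} (hi : IsLink n ε e f i) :
    max e.1 f.1 ≤ i ∧ i ≤ min e.2 f.2 ∧ (i = max e.1 f.1 → LeftLt ε f e) ∧
      (i = min e.2 f.2 → RightLt ε e f) := by
  simp only [IsLink, inSupp_iff he, inSupp_iff hf] at hi
  unfold LeftLt RightLt
  cases hε : ε i <;> simp only [hε, src, tgt, cond_true, cond_false] at hi <;> grind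

theorem exists_potential (η : ℕ → k) (m M z : ℕ) :
    ∃ β : ℕ → k, (∀ x, ¬(m < x ∧ x ≤ M) → β x = 0) ∧ ∀ i, m ≤ i → i ≤ M → (i = m → z = m) →
      (i = M → z = M + 1) → β (i + 1) = η i + β i := by
  refine ⟨fun x => if m < x ∧ x ≤ M then
    ∑ j ∈ Finset.range x, η j - ∑ j ∈ Finset.range z, η j else 0, fun x hx => if_neg hx,
    fun i hmi hiM hm hM => ?_⟩
  have hsum := Finset.sum_range_succ η i
  obtain rfl | hm' := eq_or_ne i m
  · obtain rfl : z = i := hm rfl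
    have : z + 1 ≤ M := by omega
    simp [hsum, this]
  · obtain rfl | hM' := eq_or_ne i M
    · simp [hM rfl, hsum, show m < i by omega]
    · simp only [hsum, show m < i ∧ i ≤ M by omega, show m < i + 1 ∧ i + 1 ≤ M by omega, if_true,
        and_self]
      ring

theorem extZero_of_not_hasExt (he : e.2 ≤ n + 2) (hf : f.2 ≤ n + 2) (h : ¬HasExt ε e f) :
    ExtZero (ofSeg k n ε f) (ofSeg k n ε e) := by
  intro σ
  obtain ⟨w, δ, P⟩ := σ.exists_cocycle
  obtain ⟨β, hβ₀, hβ⟩ := exists_potential (fun i => bif ε i then δ i else -δ i) (max e.1 f.1)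
    (min e.2 f.2) (if LeftLt ε f e then max e.1 f.1 else min e.2 f.2 + 1)
  refine P.splits β (fun x hx => hβ₀ x ?_) (fun x hx => hβ₀ x ?_) fun i hi => ?_
  · rw [inSupp_iff he] at hx
    omega
  · rw [inSupp_iff hf] at hx
    omega
  · obtain ⟨hmi, hiM, hm, hM⟩ := hi.bounds he hf
    have hβi := hβ i hmi hiM (fun h₀ => if_pos (hm h₀)) fun h₀ =>
      if_neg fun hL => h ⟨hmi.trans hiM, hL, hM h₀⟩
    cases hε : ε i <;> simp only [hε, src, tgt, cond_true, cond_false] at hβi ⊢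
    · rw [hβi]
      ring
    · exact hβi.symm

/-- The segments `g` and `h` exchange the endpoints of `e` and `f` in such a way that
`0 → M(e) → M(g) ⊕ M(h) → M(f) → 0` is exact. -/
structure ExtSquare (n : ℕ) (ε : ℕ → Bool) (e f g h : ℕ × ℕ) : Prop where
  inter x : InSupp n g x ∧ InSupp n h x ↔ InSupp n e x ∧ InSupp n f x
  union x : InSupp n g x ∨ InSupp n h x ↔ InSupp n e x ∨ InSupp n f x
  compat_left : Compat n ε e g
  compat_left' : Compat n ε e h
  compat_right : Compat n ε g f
  compat_right' : Compat n ε h f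

theorem HasExt.extSquare (he : e.2 ≤ n + 2) (hf : f.2 ≤ n + 2) (h : HasExt ε e f) :
    ExtSquare n ε e f (e.1, f.2) (f.1, e.2) := by
  obtain ⟨hov, hL, hR⟩ := h
  unfold LeftLt RightLt at *
  constructor
  · intro x
    simp only [inSupp_iff he, inSupp_iff hf, inSupp_iff (e := (e.1, f.2)) hf,
      inSupp_iff (e := (f.1, e.2)) he]
    omega
  · intro x
    simp only [inSupp_iff he, inSupp_iff hf, inSupp_iff (e := (e.1, f.2)) hf,
      inSupp_iff (e := (f.1, e.2)) he]
    omega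
  all_goals exact compat_of_endpoints ‹_› ‹_› (by grind) (by grind) (by grind) (by grind)

section ExtSquare

variable (S : ExtSquare n ε e f g h)

/-- The monomorphism of the exact sequence of an `ExtSquare`. -/
def ExtSquare.ι : (ofSeg k n ε e).Hom ((ofSeg k n ε g).dsum (ofSeg k n ε h)) :=
  (canHom S.compat_left).prod (canHom S.compat_left')

/-- The epimorphism of the exact sequence of an `ExtSquare`. -/
def ExtSquare.π : ((ofSeg k n ε g).dsum (ofSeg k n ε h)).Hom (ofSeg k n ε f) :=
  (canHom S.compat_right).coprod ((canHom S.compat_right').smul (-1))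

theorem ExtSquare.coord_ι_fst (x : ℕ) (u : (ofSeg k n ε e).V x) :
    coord g x (S.ι.app x u).1 = if InSupp n g x then coord e x u else 0 :=
  coord_canHom _ _ _

theorem ExtSquare.coord_ι_snd (x : ℕ) (u : (ofSeg k n ε e).V x) :
    coord h x (S.ι.app x u).2 = if InSupp n h x then coord e x u else 0 :=
  coord_canHom _ _ _

theorem ExtSquare.coord_π (x : ℕ) (v : (ofSeg k n ε g).V x) (w : (ofSeg k n ε h).V x) :
    coord f x (S.π.app x (v, w)) = if InSupp n f x then coord g x v - coord h x w else 0 := by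
  change coord f x ((canHom S.compat_right).app x v + (-1 : k) • (canHom S.compat_right').app x w)
    = _
  rw [map_add, map_smul, coord_canHom, coord_canHom]
  split_ifs <;> simp [sub_eq_add_neg]

theorem ExtSquare.ι_injective (x : ℕ) :
    Function.Injective (S.ι.app x : (ofSeg k n ε e).V x → _) := by
  refine (injective_iff_map_eq_zero _).2 fun u hu => coord_injective e x ?_
  have hg := S.coord_ι_fst x u
  have hh := S.coord_ι_snd x u
  rw [hu] at hg hh
  change coord g x 0 = _ at hg
  change coord h x 0 = _ at hh
  rw [map_zero] at hg hh ⊢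
  by_cases hxe : InSupp n e x
  · obtain hx | hx := (S.union x).2 (Or.inl hxe)
    · rw [hg, if_pos hx]
    · rw [hh, if_pos hx]
  · exact coord_eq_zero hxe u

theorem ExtSquare.π_surjective (x : ℕ) : Function.Surjective
    (S.π.app x : ((ofSeg k n ε g).dsum (ofSeg k n ε h)).V x → (ofSeg k n ε f).V x) := by
  intro u
  by_cases hx : InSupp n f x
  · obtain hxg | hxh := (S.union x).2 (Or.inr hx)
    · refine ⟨(coord f x u • gen g x, 0), coord_injective f x ((S.coord_π _ _ _).trans ?_)⟩
      simp [coord_gen, hx, hxg]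
    · refine ⟨(0, -coord f x u • gen h x), coord_injective f x ((S.coord_π _ _ _).trans ?_)⟩
      simp [coord_gen, hx, hxh]
  · exact ⟨0, coord_injective f x (by rw [coord_eq_zero hx, coord_eq_zero hx])⟩

theorem ExtSquare.π_app_eq_zero_iff (x : ℕ) (v : ((ofSeg k n ε g).dsum (ofSeg k n ε h)).V x) :
    S.π.app x v = 0 ↔ ∃ u, S.ι.app x u = v := by
  obtain ⟨v, w⟩ := v
  rw [← (coord_injective f x).eq_iff, S.coord_π, map_zero]
  have hv (hx : ¬InSupp n g x) : coord g x v = 0 := coord_eq_zero hx v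
  have hw (hx : ¬InSupp n h x) : coord h x w = 0 := coord_eq_zero hx w
  have hinter := S.inter x
  have hunion := S.union x
  constructor
  · intro hvw
    let t := if InSupp n g x then coord g x v else coord h x w
    have ht : coord e x (t • gen e x : (ofSeg k n ε e).V x) = t := by
      rw [map_smul, coord_gen]
      by_cases InSupp n e x <;> by_cases InSupp n f x <;> by_cases InSupp n g x <;> simp_all [t]
    refine ⟨t • gen e x, Prod.ext (coord_injective g x ?_) (coord_injective h x ?_)⟩
    · rw [S.coord_ι_fst, ht]
      by_cases InSupp n g x <;> simp_all [t]
    · rw [S.coord_ι_snd, ht]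
      by_cases InSupp n g x <;> by_cases InSupp n h x <;> simp_all [t, sub_eq_zero]
  · rintro ⟨u, hu⟩
    have hg := S.coord_ι_fst x u
    have hh := S.coord_ι_snd x u
    rw [hu] at hg hh
    by_cases hxe : InSupp n e x
    · by_cases hxf : InSupp n f x
      · obtain ⟨hxg, hxh⟩ := hinter.2 ⟨hxe, hxf⟩
        rw [if_pos hxg] at hg
        rw [if_pos hxh] at hh
        rw [if_pos hxf, hg, hh, sub_self]
      · exact if_neg hxf
    · rw [coord_eq_zero hxe, ite_self] at hg hh
      rw [hg, hh, sub_self, ite_self]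

/-- The short exact sequence `0 → M(e) → M(g) ⊕ M(h) → M(f) → 0` of an `ExtSquare`. -/
def ExtSquare.ses : SES (ofSeg k n ε e) (ofSeg k n ε f) where
  E := (ofSeg k n ε g).dsum (ofSeg k n ε h)
  ι := S.ι
  π := S.π
  inj := S.ι_injective
  surj := S.π_surjective
  exct := S.π_app_eq_zero_iff

theorem ExtSquare.not_splits_ses (he : ValidPair n e) (hg : g.2 ≤ n + 2) (hh : h.2 ≤ n + 2)
    (heg : e ≠ g) (heh : e ≠ h) : ¬(S.ses (k := k)).Splits := by
  rintro ⟨r, hr⟩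
  refine ofSeg_not_isZero (k := k) (ε := ε) he fun x u => ?_
  have hsum : S.ι.app x u = (inl (ofSeg k n ε g) (ofSeg k n ε h)).app x
        ((canHom S.compat_left).app x u) +
      (inr (ofSeg k n ε g) (ofSeg k n ε h)).app x ((canHom S.compat_left').app x u) :=
    Prod.ext (add_zero _).symm (zero_add _).symm
  calc u = r.app x (S.ι.app x u) := (hr x u).symm
    _ = 0 + 0 := by
      refine (congrArg (r.app x) hsum).trans ((map_add (r.app x) _ _).trans (congrArg₂ _ ?_ ?_))
      · exact comp_app_eq_zero he hg heg (canHom S.compat_left) (r.comp (inl _ _)) x u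
      · exact comp_app_eq_zero he hh heh (canHom S.compat_left') (r.comp (inr _ _)) x u
    _ = 0 := add_zero 0

end ExtSquare

theorem HasExt.exists_ses (he : ValidPair n e) (hf : f.2 ≤ n + 2) (h : HasExt ε e f) :
    ∃ σ : SES (ofSeg k n ε e) (ofSeg k n ε f), ¬σ.Splits ∧
      σ.E = (ofSeg k n ε (e.1, f.2)).dsum (ofSeg k n ε (f.1, e.2)) :=
  ⟨(h.extSquare he.2 hf).ses, (h.extSquare he.2 hf).not_splits_ses he hf he.2
    (fun heg => h.2.2.ne (Prod.ext_iff.1 heg).2) (fun heh => h.2.1.ne.symm (Prod.ext_iff.1 heh).1),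
    rfl⟩

theorem ofSeg_isZero (h : e.2 ≤ e.1) : (ofSeg k n ε e).IsZero := fun _ _ =>
  Subtype.ext (fiber_coe_eq_zero (fun hx : SuppCond _ _ _ _ => by unfold SuppCond at hx; omega) _)

theorem HasExt.indec_dsum (he : ValidPair n e) (hf : ValidPair n f) (h : HasExt ε e f)
    (hc : ¬CrossUp ε e f) : ((ofSeg k n ε (e.1, f.2)).dsum (ofSeg k n ε (f.1, e.2))).Indec := by
  have hend : max e.1 f.1 = min e.2 f.2 :=
    h.1.antisymm (not_lt.1 fun hlt => hc ⟨hlt, h.2⟩)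
  have hne := h.2.1.ne
  have hne' := h.2.2.ne
  unfold ValidPair at he hf
  obtain hfe | hef : f.2 ≤ e.1 ∨ e.2 ≤ f.1 := by omega
  · exact (ofSeg_indec (e := (f.1, e.2)) ⟨by dsimp only; omega, he.2⟩).of_iso
      (Iso.zero_dsum (ofSeg_isZero hfe)).symm
  · exact (ofSeg_indec (e := (e.1, f.2)) ⟨by dsimp only; omega, hf.2⟩).of_iso
      (Iso.dsum_zero (ofSeg_isZero hef)).symm

theorem SES.Cocycle.ne_zero_of_not_splits {σ : SES (ofSeg k n ε e) (ofSeg k n ε f)}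
    {w : ∀ x, σ.E.V x} {δ : ℕ → k} (P : σ.Cocycle w δ) (hσ : ¬σ.Splits) :
    ∃ i, IsLink n ε e f i ∧ δ i ≠ 0 := by
  by_contra! hδ
  exact hσ (P.splits (fun _ => 0) (fun _ _ => rfl) (fun _ _ => rfl) fun i hi => by
    rw [hδ i hi, add_zero])

-- The segments share a single vertex `m`, so an extension is determined by one scalar.
theorem HasExt.extOneDimIndecMid (he : ValidPair n e) (hf : ValidPair n f) (h : HasExt ε e f)
    (hc : ¬CrossUp ε e f) : ExtOneDimIndecMid (ofSeg k n ε f) (ofSeg k n ε e) := by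
  obtain ⟨σ, hσ, hE⟩ := h.exists_ses (k := k) he hf.2
  refine ⟨σ, hσ, hE ▸ h.indec_dsum he hf hc, fun τ hτ => ?_⟩
  have hlink (i) (hi : IsLink n ε e f i) : i = max e.1 f.1 := by
    obtain ⟨hmi, hiM, -⟩ := hi.bounds he.2 hf.2
    exact (hiM.trans (not_lt.1 fun hlt => hc ⟨hlt, h.2⟩)).antisymm hmi
  obtain ⟨w, δ, P⟩ := σ.exists_cocycle
  obtain ⟨w', δ', P'⟩ := τ.exists_cocycle
  obtain ⟨i, hi, hδ⟩ := P.ne_zero_of_not_splits hσ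
  obtain ⟨j, hj, hδ'⟩ := P'.ne_zero_of_not_splits hτ
  obtain rfl : i = j := (hlink i hi).trans (hlink j hj).symm
  obtain ⟨φ, hφι, hπφ⟩ := P.exists_comparison P' (c := δ i / δ' i) fun l hl => by
    rw [(hlink l hl).trans (hlink i hi).symm, div_mul_cancel₀ _ hδ']
  exact ⟨_, div_ne_zero hδ hδ', φ,
    SES.bijective_of_comparison (div_ne_zero hδ hδ') hφι hπφ, hφι, hπφ⟩

end

/-! ### Crossing segments -/

/-- The combinatorial form of `Cross`. -/
def Crosses (ε : ℕ → Bool) (e f : ℕ × ℕ) : Prop := CrossUp ε e f ∨ CrossUp ε f e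

section

variable {e f g : ℕ × ℕ}

theorem LeftLt.total (h : e.1 ≠ f.1) : LeftLt ε e f ∨ LeftLt ε f e := by
  unfold LeftLt
  grind

theorem RightLt.total (h : e.2 ≠ f.2) : RightLt ε e f ∨ RightLt ε f e := by
  unfold RightLt
  grind

theorem LeftLt.trans (h : LeftLt ε e f) (h' : LeftLt ε f g) : LeftLt ε e g := by
  unfold LeftLt at *
  grind

theorem RightLt.trans (h : RightLt ε e f) (h' : RightLt ε f g) : RightLt ε e g := by
  unfold RightLt at *
  grind

theorem LeftLt.asymm (h : LeftLt ε e f) : ¬LeftLt ε f e :=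
  fun h' => (h.trans h').ne rfl

theorem Crosses.symm (h : Crosses ε e f) : Crosses ε f e := Or.symm h

theorem Crosses.left_ne (h : Crosses ε e f) : e.1 ≠ f.1 :=
  h.elim (fun h => h.2.1.ne.symm) fun h => h.2.1.ne

theorem Crosses.right_ne (h : Crosses ε e f) : e.2 ≠ f.2 :=
  h.elim (fun h => h.2.2.ne) fun h => h.2.2.ne.symm

theorem leftLt_not : LeftLt (fun i => !ε i) e f ↔ LeftLt ε f e := by
  simp [LeftLt, or_comm]

theorem rightLt_not : RightLt (fun i => !ε i) e f ↔ RightLt ε f e := by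
  simp [RightLt, or_comm]

theorem crossUp_not : CrossUp (fun i => !ε i) e f ↔ CrossUp ε f e := by
  rw [CrossUp, CrossUp, leftLt_not, rightLt_not, max_comm, min_comm]

theorem crosses_not : Crosses (fun i => !ε i) e f ↔ Crosses ε e f := by
  rw [Crosses, Crosses, crossUp_not, crossUp_not, or_comm]

theorem CrossUp.crosses_of_crosses_left_right (h : CrossUp ε e f) (hg : g.1 < g.2)
    (hc : Crosses ε (e.1, f.2) g) : Crosses ε e g ∨ Crosses ε f g := by
  obtain ⟨hov, hL, hR⟩ := h
  obtain ⟨hov', hL' : LeftLt ε g e, hR' : RightLt ε f g⟩ |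
    ⟨hov', hL' : LeftLt ε e g, hR' : RightLt ε g f⟩ := hc
  · dsimp only at hov'
    rcases lt_or_ge g.1 e.2 with hlt | hge
    · exact Or.inl (Or.inl ⟨by omega, hL', hR.trans hR'⟩)
    · refine Or.inr (Or.inl ⟨by omega, ?_, hR'⟩)
      exact Or.inr ⟨by omega, (hL'.resolve_left fun h => by omega).2⟩
  · dsimp only at hov'
    rcases lt_or_ge f.1 g.2 with hlt | hge
    · exact Or.inr (Or.inr ⟨by omega, hL.trans hL', hR'⟩)
    · refine Or.inl (Or.inr ⟨by omega, hL', ?_⟩)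
      exact Or.inl ⟨by omega, (hR'.resolve_right fun h => by omega).2⟩

theorem CrossUp.crosses_of_crosses_right_left (h : CrossUp ε e f) (hg : g.1 < g.2)
    (hc : Crosses ε (f.1, e.2) g) : Crosses ε e g ∨ Crosses ε f g := by
  have := (crossUp_not.2 h).crosses_of_crosses_left_right hg (crosses_not.2 hc)
  rwa [crosses_not, crosses_not, or_comm] at this

theorem upperVertex_iff_lowerVertex_not {x : ℕ} :
    UpperVertex n ε x ↔ LowerVertex n (fun i => !ε i) x := by
  simp [UpperVertex, LowerVertex]

theorem upperEdge_iff_lowerEdge_not {a b : ℕ} :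
    UpperEdge n ε a b ↔ LowerEdge n (fun i => !ε i) a b := by
  simp only [UpperEdge, LowerEdge, upperVertex_iff_lowerVertex_not]

theorem LowerEdge.not_crosses (h : LowerEdge n ε e.1 e.2) (he : e.2 ≤ n + 2) (hf : f.2 ≤ n + 2) :
    ¬Crosses ε e f := by
  simp only [Crosses, CrossUp, max_lt_iff, lt_min_iff]
  obtain ⟨hl, hr, -, hbetween⟩ := h
  have hbetween_left := hbetween f.1
  have hbetween_right := hbetween f.2
  unfold LowerVertex at *
  rintro (⟨hov, hL, -⟩ | ⟨hov, -, hR⟩)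
  · unfold LeftLt at hL
    grind
  · unfold RightLt at hR
    grind

theorem Crosses.diagonal (h : Crosses ε e f) (he : ValidPair n e) (hf : f.2 ≤ n + 2) :
    Diagonal n ε e := by
  refine ⟨he, ?_⟩
  rintro (hlow | hup)
  · exact hlow.not_crosses he.2 hf h
  · exact (upperEdge_iff_lowerEdge_not.1 hup).not_crosses he.2 hf (crosses_not.2 h)

end

/-! ### Slopes and crossings in the plane -/

/-- The ordinate at abscissa `x` of the line through the segment `γ(e)`. -/
def lineHeight (p : ℕ → ℂ) (e : ℕ × ℕ) (x : ℝ) : ℝ :=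
  (p e.1).im + slope p e * (x - (p e.1).re)

section

variable {p : ℕ → ℂ} {e f : ℕ × ℕ}

theorem lineHeight_left : lineHeight p e (p e.1).re = (p e.1).im := by
  simp [lineHeight]

theorem lineHeight_right (h : (p e.1).re < (p e.2).re) :
    lineHeight p e (p e.2).re = (p e.2).im := by
  unfold lineHeight slope
  rw [div_mul_cancel₀ _ (by linarith)]
  ring

theorem continuous_lineHeight : Continuous (lineHeight p e) := by
  unfold lineHeight
  fun_prop

theorem mem_seg_iff (h : (p e.1).re < (p e.2).re) {z : ℂ} :
    z ∈ Seg p e ↔ z.re ∈ Set.Icc (p e.1).re (p e.2).re ∧ z.im = lineHeight p e z.re := by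
  have hpos : 0 < (p e.2).re - (p e.1).re := sub_pos.2 h
  unfold Seg lineHeight slope
  rw [segment_eq_image]
  constructor
  · rintro ⟨t, ⟨h0, h1⟩, rfl⟩
    simp only [Set.mem_Icc, Complex.add_re, Complex.add_im, Complex.real_smul,
      Complex.re_ofReal_mul, Complex.im_ofReal_mul]
    refine ⟨⟨by nlinarith, by nlinarith⟩, ?_⟩
    field_simp
    ring
  · rintro ⟨⟨h1, h2⟩, h3⟩
    refine ⟨(z.re - (p e.1).re) / ((p e.2).re - (p e.1).re),
      ⟨div_nonneg (by linarith) hpos.le, (div_le_one hpos).2 (by linarith)⟩, ?_⟩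
    apply Complex.ext
    · simp only [Complex.add_re, Complex.real_smul, Complex.re_ofReal_mul]
      field_simp
      ring
    · simp only [Complex.add_im, Complex.real_smul, Complex.im_ofReal_mul, h3]
      field_simp
      ring

theorem eq_of_mem_seg_of_re_eq (h : (p e.1).re < (p e.2).re) {z w : ℂ} (hz : z ∈ Seg p e)
    (hw : w ∈ Seg p e) (hre : z.re = w.re) : z = w :=
  Complex.ext hre (by rw [((mem_seg_iff h).1 hz).2, ((mem_seg_iff h).1 hw).2, hre])

theorem lineHeight_eq_of_eq_of_eq {x y : ℝ} (hxy : x ≠ y)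
    (hx : lineHeight p e x = lineHeight p f x) (hy : lineHeight p e y = lineHeight p f y) (z : ℝ) :
    lineHeight p e z = lineHeight p f z := by
  unfold lineHeight at *
  have hslope : slope p e = slope p f :=
    mul_right_cancel₀ (sub_ne_zero.2 hxy) (by linear_combination hx - hy)
  rw [hslope] at hx ⊢
  linear_combination hx

theorem lineHeight_lt_of_lt_of_lt {x y z : ℝ} (hx : lineHeight p e x < lineHeight p f x)
    (hz : lineHeight p e z < lineHeight p f z) (hxy : x ≤ y) (hyz : y ≤ z) :
    lineHeight p e y < lineHeight p f y := by
  unfold lineHeight at *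
  rcases le_total (slope p e) (slope p f) with h | h <;> nlinarith

theorem slope_lt_of_lineHeight {x z : ℝ} (hxz : x < z)
    (hx : lineHeight p f x < lineHeight p e x) (hz : lineHeight p e z < lineHeight p f z) :
    slope p e < slope p f := by
  unfold lineHeight at hx hz
  by_contra! h
  nlinarith

theorem Cross.symm (h : Cross p e f) : Cross p f e := by
  obtain ⟨z, hze, hzf, hz⟩ := h
  exact ⟨z, hzf, hze, fun h => hz h.symm⟩

end

theorem mem_of_convex_of_re_eq {S : Set ℂ} (hS : Convex ℝ S) {z₁ z₂ z : ℂ} (h₁ : z₁ ∈ S)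
    (h₂ : z₂ ∈ S) (hre₁ : z₁.re = z.re) (hre₂ : z₂.re = z.re) (him₁ : z₁.im ≤ z.im)
    (him₂ : z.im ≤ z₂.im) : z ∈ S := by
  have him : z.im ∈ segment ℝ z₁.im z₂.im := Icc_subset_segment ⟨him₁, him₂⟩
  obtain ⟨a, b, ha, hb, hab, hz⟩ := him
  convert hS h₁ h₂ ha hb hab using 1
  refine Complex.ext ?_ ?_
  · simp only [Complex.add_re, Complex.real_smul, Complex.re_ofReal_mul, hre₁, hre₂, ← add_mul, hab,
      one_mul]
  · simpa using hz.symm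

namespace PolyPts

variable {p : ℕ → ℂ} {e f : ℕ × ℕ}

theorem re_lt (hp : PolyPts n ε p) (he : ValidPair n e) : (p e.1).re < (p e.2).re :=
  hp.1 _ _ he.1 he.2

theorem re_le (hp : PolyPts n ε p) {a b : ℕ} (hab : a ≤ b) (hb : b ≤ n + 2) :
    (p a).re ≤ (p b).re :=
  hab.eq_or_lt.elim (fun h => h ▸ le_rfl) fun h => (hp.1 a b h hb).le

theorem lineHeight_mem_convexHull (hp : PolyPts n ε p) {c : ℕ} (hc : e.1 < c) (hc' : c < e.2)
    (he : e.2 ≤ n + 2) : (⟨(p c).re, lineHeight p e (p c).re⟩ : ℂ) ∈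
      convexHull ℝ (p '' {j | j ≤ n + 2 ∧ j ≠ c}) := by
  have hmem (j : ℕ) (hj : j ≤ n + 2) (hjc : j ≠ c) :
      p j ∈ convexHull ℝ (p '' {j | j ≤ n + 2 ∧ j ≠ c}) :=
    subset_convexHull _ _ ⟨j, ⟨hj, hjc⟩, rfl⟩
  refine (convex_convexHull ℝ _).segment_subset (hmem e.1 (by omega) hc.ne) (hmem e.2 he hc'.ne')
    ((mem_seg_iff (hp.re_lt ⟨hc.trans hc', he⟩)).2 ⟨⟨?_, ?_⟩, rfl⟩)
  · exact (hp.1 _ _ hc (by omega)).le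
  · exact (hp.1 _ _ hc' he).le

-- Otherwise `p c` lies on the vertical segment between `γ(e)` and the line `L` through
-- `p 0` and `p (n + 2)`, contradicting convex position.
theorem lineHeight_lt_im (hp : PolyPts n ε p) {c : ℕ} (hc : e.1 < c) (hc' : c < e.2)
    (he : e.2 ≤ n + 2) (hε : ε c = true) : lineHeight p e (p c).re < (p c).im := by
  have hL := hp.lineHeight_mem_convexHull (e := (0, n + 2)) (by dsimp only; omega)
    (hc'.trans_le he) le_rfl
  have hc₀ := (hp.2.2.1 c (by omega) (by omega)).1 hε
  by_contra! hlt
  refine hp.2.2.2 c (by omega) (mem_of_convex_of_re_eq (convex_convexHull ℝ _) hL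
    (hp.lineHeight_mem_convexHull hc hc' he) rfl rfl ?_ hlt)
  simpa [lineHeight, slope, hp.2.1] using hc₀.le

theorem im_lt_lineHeight (hp : PolyPts n ε p) {c : ℕ} (hc : e.1 < c) (hc' : c < e.2)
    (he : e.2 ≤ n + 2) (hε : ε c = false) : (p c).im < lineHeight p e (p c).re := by
  have hL := hp.lineHeight_mem_convexHull (e := (0, n + 2)) (by dsimp only; omega)
    (hc'.trans_le he) le_rfl
  have hc₀ := (hp.2.2.1 c (by omega) (by omega)).2 hε
  by_contra! hlt
  refine hp.2.2.2 c (by omega) (mem_of_convex_of_re_eq (convex_convexHull ℝ _)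
    (hp.lineHeight_mem_convexHull hc hc' he) hL rfl rfl hlt ?_)
  simpa [lineHeight, slope, hp.2.1] using hc₀.le

theorem lineHeight_lt_of_leftLt (hp : PolyPts n ε p) (he : ValidPair n e) (hf : ValidPair n f)
    (hov : max e.1 f.1 < min e.2 f.2) (h : LeftLt ε e f) :
    lineHeight p e (p (max e.1 f.1)).re < lineHeight p f (p (max e.1 f.1)).re := by
  obtain ⟨hlt, hε⟩ | ⟨hlt, hε⟩ := h
  · rw [max_eq_right hlt.le, lineHeight_left (e := f)]
    exact hp.lineHeight_lt_im hlt (by omega) he.2 hε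
  · rw [max_eq_left hlt.le, lineHeight_left (e := e)]
    exact hp.im_lt_lineHeight hlt (by omega) hf.2 hε

theorem lineHeight_lt_of_rightLt (hp : PolyPts n ε p) (he : ValidPair n e) (hf : ValidPair n f)
    (hov : max e.1 f.1 < min e.2 f.2) (h : RightLt ε e f) :
    lineHeight p e (p (min e.2 f.2)).re < lineHeight p f (p (min e.2 f.2)).re := by
  obtain ⟨hlt, hε⟩ | ⟨hlt, hε⟩ := h
  · rw [min_eq_left hlt.le, lineHeight_right (hp.re_lt he)]
    exact hp.im_lt_lineHeight (by omega) hlt hf.2 hε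
  · rw [min_eq_right hlt.le, lineHeight_right (hp.re_lt hf)]
    exact hp.lineHeight_lt_im (by omega) hlt he.2 hε

theorem slope_lt_of_crossUp (hp : PolyPts n ε p) (he : ValidPair n e) (hf : ValidPair n f)
    (h : CrossUp ε e f) : slope p e < slope p f := by
  obtain ⟨hov, hL, hR⟩ := h
  have hx := hp.lineHeight_lt_of_leftLt hf he (by omega) hL
  rw [max_comm] at hx
  exact slope_lt_of_lineHeight (hp.1 _ _ hov (min_le_of_left_le he.2)) hx
    (hp.lineHeight_lt_of_rightLt he hf hov hR)

theorem cross_of_crossUp (hp : PolyPts n ε p) (he : ValidPair n e) (hf : ValidPair n f)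
    (h : CrossUp ε e f) : Cross p e f := by
  obtain ⟨hov, hL, hR⟩ := h
  have hM : min e.2 f.2 ≤ n + 2 := min_le_of_left_le he.2
  have hx := hp.lineHeight_lt_of_leftLt hf he (by omega) hL
  have hz := hp.lineHeight_lt_of_rightLt he hf hov hR
  rw [max_comm] at hx
  obtain ⟨y, ⟨hxy, hyz⟩, hy⟩ := intermediate_value_Ioo (hp.1 _ _ hov hM).le
    (continuous_lineHeight.sub continuous_lineHeight).continuousOn ⟨sub_neg.2 hx, sub_pos.2 hz⟩
  have hxe := hp.re_le (le_max_left e.1 f.1) (hov.le.trans hM)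
  have hxf := hp.re_le (le_max_right e.1 f.1) (hov.le.trans hM)
  have hze := hp.re_le (min_le_left e.2 f.2) he.2
  have hzf := hp.re_le (min_le_right e.2 f.2) hf.2
  refine ⟨⟨y, lineHeight p e y⟩, (mem_seg_iff (hp.re_lt he)).2 ⟨⟨?_, ?_⟩, rfl⟩,
    (mem_seg_iff (hp.re_lt hf)).2 ⟨⟨?_, ?_⟩, (sub_eq_zero.1 hy).symm⟩, ?_⟩
  iterate 4 dsimp only; linarith
  rintro ⟨hy | hy, -⟩
  · have := congrArg Complex.re hy
    dsimp only at this
    linarith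
  · have := congrArg Complex.re hy
    dsimp only at this
    linarith

theorem left_ne_of_cross (hp : PolyPts n ε p) (he : ValidPair n e) (hf : ValidPair n f)
    (hef : e ≠ f) (h : Cross p e f) : e.1 ≠ f.1 := by
  obtain ⟨w, hwe, hwf, hw⟩ := h
  intro h₁
  by_cases hre : w.re = (p e.1).re
  · have hwp := eq_of_mem_seg_of_re_eq (hp.re_lt he) hwe (left_mem_segment ℝ _ _) hre
    exact hw ⟨Or.inl hwp, Or.inl (h₁ ▸ hwp)⟩
  · have hline := lineHeight_eq_of_eq_of_eq hre
      (((mem_seg_iff (hp.re_lt he)).1 hwe).2.symm.trans ((mem_seg_iff (hp.re_lt hf)).1 hwf).2)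
      (lineHeight_left.trans (by rw [h₁, lineHeight_left]))
    have hov : max e.1 f.1 < min e.2 f.2 := by
      have := he.1
      have := hf.1
      omega
    rcases RightLt.total (ε := ε) fun h₂ => hef (Prod.ext h₁ h₂) with hR | hR
    · exact (hp.lineHeight_lt_of_rightLt he hf hov hR).ne (hline _)
    · exact (hp.lineHeight_lt_of_rightLt hf he (by omega) hR).ne' (hline _)

theorem right_ne_of_cross (hp : PolyPts n ε p) (he : ValidPair n e) (hf : ValidPair n f)
    (hef : e ≠ f) (h : Cross p e f) : e.2 ≠ f.2 := by
  have hL := LeftLt.total (ε := ε) (hp.left_ne_of_cross he hf hef h)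
  obtain ⟨w, hwe, hwf, hw⟩ := h
  intro h₂
  by_cases hre : w.re = (p e.2).re
  · have hwp := eq_of_mem_seg_of_re_eq (hp.re_lt he) hwe (right_mem_segment ℝ _ _) hre
    exact hw ⟨Or.inr hwp, Or.inr (h₂ ▸ hwp)⟩
  · have hline := lineHeight_eq_of_eq_of_eq hre
      (((mem_seg_iff (hp.re_lt he)).1 hwe).2.symm.trans ((mem_seg_iff (hp.re_lt hf)).1 hwf).2)
      ((lineHeight_right (hp.re_lt he)).trans (by rw [h₂, lineHeight_right (hp.re_lt hf)]))
    have hov : max e.1 f.1 < min e.2 f.2 := by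
      have := he.1
      have := hf.1
      omega
    rcases hL with hL | hL
    · exact (hp.lineHeight_lt_of_leftLt he hf hov hL).ne (hline _)
    · exact (hp.lineHeight_lt_of_leftLt hf he (by omega) hL).ne' (hline _)

theorem left_lt_right_of_cross (hp : PolyPts n ε p) (he : ValidPair n e) (hf : ValidPair n f)
    (h : Cross p e f) : f.1 < e.2 := by
  obtain ⟨w, hwe, hwf, hw⟩ := h
  have hwe₂ := ((mem_seg_iff (hp.re_lt he)).1 hwe).1.2
  have hwf₁ := ((mem_seg_iff (hp.re_lt hf)).1 hwf).1.1
  by_contra! hle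
  have hre := hp.re_le hle (hf.1.le.trans hf.2)
  have hwp := eq_of_mem_seg_of_re_eq (hp.re_lt he) hwe (right_mem_segment ℝ _ _)
    (hwe₂.antisymm (hre.trans hwf₁))
  have hwq := eq_of_mem_seg_of_re_eq (hp.re_lt hf) hwf (left_mem_segment ℝ _ _)
    ((hwe₂.trans hre).antisymm hwf₁)
  exact hw ⟨Or.inr hwp, Or.inl hwq⟩

theorem crosses_of_cross (hp : PolyPts n ε p) (he : ValidPair n e) (hf : ValidPair n f)
    (hef : e ≠ f) (h : Cross p e f) : Crosses ε e f := by
  have hov : max e.1 f.1 < min e.2 f.2 :=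
    max_lt (lt_min he.1 (hp.left_lt_right_of_cross hf he h.symm))
      (lt_min (hp.left_lt_right_of_cross he hf h) hf.1)
  wlog hL : LeftLt ε f e generalizing e f
  · refine (this hf he hef.symm h.symm (by omega) ?_).symm
    exact (LeftLt.total (hp.left_ne_of_cross he hf hef h)).resolve_right hL
  refine Or.inl ⟨hov, hL, (RightLt.total (hp.right_ne_of_cross he hf hef h)).resolve_right
    fun hR => ?_⟩
  obtain ⟨w, hwe, hwf, -⟩ := h
  obtain ⟨⟨hwe₁, hwe₂⟩, hw⟩ := (mem_seg_iff (hp.re_lt he)).1 hwe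
  obtain ⟨⟨hwf₁, hwf₂⟩, hw'⟩ := (mem_seg_iff (hp.re_lt hf)).1 hwf
  refine (lineHeight_lt_of_lt_of_lt (hp.lineHeight_lt_of_leftLt hf he (by omega) hL)
    (hp.lineHeight_lt_of_rightLt hf he (by omega) hR) ?_ ?_).ne (hw'.symm.trans hw)
  · rcases max_choice f.1 e.1 with h | h <;> rwa [h]
  · rcases min_choice f.2 e.2 with h | h <;> rwa [h]

theorem cross_iff (hp : PolyPts n ε p) (he : ValidPair n e) (hf : ValidPair n f) (hef : e ≠ f) :
    Cross p e f ↔ Crosses ε e f :=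
  ⟨hp.crosses_of_cross he hf hef, fun h =>
    h.elim (hp.cross_of_crossUp he hf) fun h => (hp.cross_of_crossUp hf he h).symm⟩

end PolyPts

/-! ### Maximal almost rigid representations -/

section

variable {e f : ℕ × ℕ} {L : List (ℕ × ℕ)}

theorem sumOfSegs_singleton_iso (e : ℕ × ℕ) : (sumOfSegs k n ε [e]).Iso (ofSeg k n ε e) :=
  Iso.dsum_zero zeroRep_isZero

theorem sumOfSegs_isSummand_iff {M : List (ℕ × ℕ)} (hM : ∀ f ∈ M, ValidPair n f)
    (hL : ∀ f ∈ L, ValidPair n f) :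
    (sumOfSegs k n ε M).IsSummand (sumOfSegs k n ε L) ↔ M.Subperm L := by
  constructor
  · rintro ⟨B, hB⟩
    obtain ⟨N, hN, hBN⟩ := exists_iso_sumOfSegs B
    have hperm : L.Perm (M ++ N) :=
      perm_of_sumOfSegs_iso (k := k) (ε := ε) hL (List.forall_mem_append.2 ⟨hM, hN⟩)
        ((hB.trans ((Iso.refl _).dsum hBN)).trans (sumOfSegs_append M N).symm)
    exact List.subperm_iff.2 ⟨_, hperm.symm, List.sublist_append_left M N⟩
  · intro h
    obtain ⟨L', hL', hML'⟩ := List.subperm_iff.1 h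
    obtain ⟨N, hN⟩ := hML'.exists_perm_append
    exact ⟨sumOfSegs k n ε N,
      (sumOfSegs_iso_of_perm (hL'.symm.trans hN)).trans (sumOfSegs_append M N)⟩

theorem ofSeg_isSummand_iff (he : ValidPair n e) (hL : ∀ f ∈ L, ValidPair n f) :
    (ofSeg k n ε e).IsSummand (sumOfSegs k n ε L) ↔ e ∈ L := by
  rw [← List.singleton_subperm_iff, ← sumOfSegs_isSummand_iff (k := k) (ε := ε) (by simpa) hL]
  exact ⟨fun h => h.of_iso (sumOfSegs_singleton_iso e).symm (.refl _),
    fun h => h.of_iso (sumOfSegs_singleton_iso e) (.refl _)⟩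

theorem ofSeg_dsum_self_isSummand_iff (he : ValidPair n e) (hL : ∀ f ∈ L, ValidPair n f) :
    ((ofSeg k n ε e).dsum (ofSeg k n ε e)).IsSummand (sumOfSegs k n ε L) ↔ [e, e].Subperm L := by
  have hpair : (sumOfSegs k n ε [e, e]).Iso ((ofSeg k n ε e).dsum (ofSeg k n ε e)) :=
    (Iso.refl _).dsum (sumOfSegs_singleton_iso e)
  rw [← sumOfSegs_isSummand_iff (k := k) (ε := ε) (by simpa) hL]
  exact ⟨fun h => h.of_iso hpair.symm (.refl _), fun h => h.of_iso hpair (.refl _)⟩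

theorem basic_sumOfSegs_iff (hL : ∀ f ∈ L, ValidPair n f) :
    (sumOfSegs k n ε L).Basic ↔ L.Nodup := by
  constructor
  · refine fun h => List.nodup_iff_sublist.2 fun e hsub => ?_
    have he : ValidPair n e := hL e (hsub.subset List.mem_cons_self)
    exact h _ (ofSeg_indec he) ((ofSeg_dsum_self_isSummand_iff he hL).2 hsub.subperm)
  · intro hnodup A hA hAA
    obtain ⟨e, he, hAe⟩ := Indec.exists_iso_ofSeg hA
    have hsub := (ofSeg_dsum_self_isSummand_iff he hL).1 (hAA.of_iso (hAe.dsum hAe) (.refl _))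
    obtain ⟨L', hL', hsub'⟩ := List.subperm_iff.1 hsub
    exact List.nodup_iff_sublist.1 (hL'.nodup_iff.2 hnodup) e hsub'

theorem extZero_or_extOneDimIndecMid_iff (he : ValidPair n e) (hf : ValidPair n f) :
    ExtZero (ofSeg k n ε f) (ofSeg k n ε e) ∨ ExtOneDimIndecMid (ofSeg k n ε f) (ofSeg k n ε e) ↔
      ¬CrossUp ε e f := by
  constructor
  · intro h hc
    obtain ⟨σ, hσ, hE⟩ := HasExt.exists_ses (k := k) he hf.2 ⟨hc.1.le, hc.2⟩
    obtain ⟨hlr, hrl⟩ : e.1 < f.2 ∧ f.1 < e.2 := by have := hc.1; omega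
    rcases h with hzero | ⟨τ, -, hτ, hiso⟩
    · exact hσ (hzero σ)
    · obtain ⟨c, -, φ, hφ, -⟩ := hiso σ hσ
      have hτσ : τ.E.Iso σ.E := ⟨φ, hφ⟩
      rw [hE] at hτσ
      exact (hτ.2 _ _ hτσ).elim (ofSeg_not_isZero ⟨hlr, hf.2⟩)
        (ofSeg_not_isZero ⟨hrl, he.2⟩)
  · intro hc
    by_cases h : HasExt ε e f
    · exact Or.inr (h.extOneDimIndecMid he hf hc)
    · exact Or.inl (extZero_of_not_hasExt he.2 hf.2 h)

theorem almostRigid_sumOfSegs_iff (hL : ∀ f ∈ L, ValidPair n f) :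
    AlmostRigid (sumOfSegs k n ε L) ↔ L.Nodup ∧ ∀ e ∈ L, ∀ f ∈ L, ¬Crosses ε e f := by
  rw [AlmostRigid, basic_sumOfSegs_iff hL]
  refine and_congr_right fun _ => ⟨fun h e he f hf => ?_, fun h A B hA hB hAL hBL => ?_⟩
  · have not_crossUp {e f} (he : e ∈ L) (hf : f ∈ L) : ¬CrossUp ε e f :=
      (extZero_or_extOneDimIndecMid_iff (k := k) (hL e he) (hL f hf)).1
        (h _ _ (ofSeg_indec (hL f hf)) (ofSeg_indec (hL e he))
          ((ofSeg_isSummand_iff (hL f hf) hL).2 hf) ((ofSeg_isSummand_iff (hL e he) hL).2 he))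
    exact not_or.2 ⟨not_crossUp he hf, not_crossUp hf he⟩
  · obtain ⟨f, hf, hAf⟩ := Indec.exists_iso_ofSeg hA
    obtain ⟨e, he, hBe⟩ := Indec.exists_iso_ofSeg hB
    have hfL : f ∈ L := (ofSeg_isSummand_iff hf hL).1 (hAL.of_iso hAf (.refl _))
    have heL : e ∈ L := (ofSeg_isSummand_iff he hL).1 (hBL.of_iso hBe (.refl _))
    exact ((extZero_or_extOneDimIndecMid_iff he hf).2 fun hc => h e heL f hfL (Or.inl hc)).imp
      (fun h => h.of_iso hAf.symm hBe.symm) fun h => h.of_iso hAf.symm hBe.symm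

end

section

variable {X Y X' Y' : ARep k n ε}

theorem AlmostRigid.of_iso (h : AlmostRigid X) (hXY : X.Iso Y) : AlmostRigid Y :=
  ⟨fun A hA hAY => h.1 A hA (hAY.of_iso (.refl _) hXY.symm), fun A B hA hB hAY hBY =>
    h.2 A B hA hB (hAY.of_iso (.refl _) hXY.symm) (hBY.of_iso (.refl _) hXY.symm)⟩

theorem MaxAlmostRigid.of_iso (h : MaxAlmostRigid X) (hXY : X.Iso Y) : MaxAlmostRigid Y :=
  ⟨h.1.of_iso hXY, fun M hM hY => h.2 M hM (hY.of_iso (hXY.symm.dsum (.refl M)))⟩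

theorem MarCovers.of_iso (h : MarCovers X Y) (hX : X.Iso X') (hY : Y.Iso Y') :
    MarCovers X' Y' := by
  obtain ⟨M, N, C, hM, hN, hXM, hYN, hσ⟩ := h
  exact ⟨M, N, C, hM, hN, hX.symm.trans hXM, hY.symm.trans hYN, hσ⟩

end

/-- The combinatorial form of `IsTriangulation`, for possibly infinite collections. -/
structure IsMaxNoncrossing (n : ℕ) (ε : ℕ → Bool) (S : Set (ℕ × ℕ)) : Prop where
  valid : ∀ e ∈ S, ValidPair n e
  not_crosses : ∀ e ∈ S, ∀ f ∈ S, ¬Crosses ε e f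
  exists_crosses : ∀ g, ValidPair n g → g ∉ S → ∃ f ∈ S, Crosses ε g f

theorem isTriangulation_iff {p : ℕ → ℂ} (hp : PolyPts n ε p) {T : Finset (ℕ × ℕ)} :
    IsTriangulation n p T ↔ IsMaxNoncrossing n ε T := by
  constructor
  · intro ⟨hT, hnc, hmax⟩
    refine ⟨hT, fun e he f hf hc => ?_, fun g hg hgT => ?_⟩
    · have hef : e ≠ f := ne_of_apply_ne Prod.fst hc.left_ne
      exact hnc e he f hf hef ((hp.cross_iff (hT e he) (hT f hf) hef).2 hc)
    · obtain ⟨f, hf, hc⟩ := hmax g hg hgT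
      exact ⟨f, hf, (hp.cross_iff hg (hT f hf) fun h => hgT (h ▸ hf)).1 hc⟩
  · intro ⟨hT, hnc, hmax⟩
    refine ⟨hT, fun e he f hf hef hc => ?_, fun g hg hgT => ?_⟩
    · exact hnc e he f hf ((hp.cross_iff (hT e he) (hT f hf) hef).1 hc)
    · obtain ⟨f, hf, hc⟩ := hmax g hg hgT
      exact ⟨f, hf, (hp.cross_iff hg (hT f hf) fun h => hgT (h ▸ hf)).2 hc⟩

section

variable {L : List (ℕ × ℕ)}

theorem MaxAlmostRigid.isMaxNoncrossing (hL : ∀ f ∈ L, ValidPair n f)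
    (h : MaxAlmostRigid (sumOfSegs k n ε L)) : IsMaxNoncrossing n ε {e | e ∈ L} := by
  obtain ⟨hnodup, hnc⟩ := (almostRigid_sumOfSegs_iff hL).1 h.1
  refine ⟨hL, hnc, fun g hg hgL => ?_⟩
  by_contra! hgc
  have hgL' : AlmostRigid (sumOfSegs k n ε (g :: L)) := by
    refine (almostRigid_sumOfSegs_iff (List.forall_mem_cons.2 ⟨hg, hL⟩)).2
      ⟨List.nodup_cons.2 ⟨hgL, hnodup⟩, ?_⟩
    simp only [List.forall_mem_cons]
    exact ⟨⟨fun hc => hc.left_ne rfl, hgc⟩, fun e he => ⟨fun hc => hgc e he hc.symm, hnc e he⟩⟩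
  exact h.2 _ (ofSeg_not_isZero hg) (hgL'.of_iso (Iso.dsum_comm _ _))

theorem IsMaxNoncrossing.maxAlmostRigid (hnodup : L.Nodup)
    (h : IsMaxNoncrossing n ε {e | e ∈ L}) : MaxAlmostRigid (sumOfSegs k n ε L) := by
  refine ⟨(almostRigid_sumOfSegs_iff h.valid).2 ⟨hnodup, h.not_crosses⟩, fun M hM hLM => ?_⟩
  obtain ⟨N, hN, hMN⟩ := exists_iso_sumOfSegs M
  obtain ⟨hnodup', hnc⟩ :=
    (almostRigid_sumOfSegs_iff (List.forall_mem_append.2 ⟨h.valid, hN⟩)).1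
      (hLM.of_iso (((Iso.refl _).dsum hMN).trans (sumOfSegs_append L N).symm))
  obtain - | ⟨g, N⟩ := N
  · exact hM (zeroRep_isZero.of_iso hMN.symm)
  · have hgL : g ∉ L := fun hgL => List.disjoint_of_nodup_append hnodup' hgL List.mem_cons_self
    obtain ⟨f, hf, hc⟩ := h.exists_crosses g (hN g List.mem_cons_self) hgL
    exact hnc g (List.mem_append_right L List.mem_cons_self) f (List.mem_append_left _ hf) hc

end

theorem maxAlmostRigid_FRep {p : ℕ → ℂ} (hp : PolyPts n ε p) {T : Finset (ℕ × ℕ)}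
    (hT : IsTriangulation n p T) : MaxAlmostRigid (FRep k n ε T) := by
  have hset : {e | e ∈ T.toList} = (T : Set (ℕ × ℕ)) := Set.ext fun _ => Finset.mem_toList
  exact IsMaxNoncrossing.maxAlmostRigid T.nodup_toList (hset ▸ (isTriangulation_iff hp).1 hT)

theorem MaxAlmostRigid.exists_isTriangulation {p : ℕ → ℂ} (hp : PolyPts n ε p) {X : ARep k n ε}
    (hX : MaxAlmostRigid X) : ∃ T, IsTriangulation n p T ∧ X.Iso (FRep k n ε T) := by
  obtain ⟨L, hL, hXL⟩ := exists_iso_sumOfSegs X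
  have hmax := hX.of_iso hXL
  have hnodup : L.Nodup := ((almostRigid_sumOfSegs_iff hL).1 hmax.1).1
  refine ⟨L.toFinset, (isTriangulation_iff hp).2 ?_,
    hXL.trans (sumOfSegs_iso_of_perm (List.toFinset_toList hnodup).symm)⟩
  rw [List.coe_toFinset]
  exact hmax.isMaxNoncrossing hL

theorem eq_of_FRep_iso {T T' : Finset (ℕ × ℕ)} (hT : ∀ e ∈ T, ValidPair n e)
    (hT' : ∀ e ∈ T', ValidPair n e) (h : (FRep k n ε T).Iso (FRep k n ε T')) : T = T' := by
  have hperm : T.toList.Perm T'.toList :=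
    perm_of_sumOfSegs_iso (k := k) (ε := ε) (by simpa using hT) (by simpa using hT') h
  simpa using List.toFinset_eq_of_perm _ _ hperm

/-! ### Flips -/

section

variable {e f : ℕ × ℕ} {R : Set (ℕ × ℕ)}

theorem crosses_of_flip (h₁ : IsMaxNoncrossing n ε (insert e R))
    (h₂ : IsMaxNoncrossing n ε (insert f R)) (hef : e ≠ f) (hf : f ∉ R) : Crosses ε e f := by
  obtain ⟨g, rfl | hg, hc⟩ := h₁.exists_crosses f (h₂.valid f (R.mem_insert f))
    (Set.mem_insert_iff.not.2 (not_or.2 ⟨hef.symm, hf⟩))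
  · exact hc.symm
  · exact absurd hc (h₂.not_crosses f (R.mem_insert f) g (Set.mem_insert_of_mem f hg))

theorem mem_of_flip (h₁ : IsMaxNoncrossing n ε (insert e R))
    (h₂ : IsMaxNoncrossing n ε (insert f R)) {g : ℕ × ℕ} (hg : ValidPair n g) (hge : g ≠ e)
    (hnc : ¬Crosses ε g e)
    (h : ∀ x, ValidPair n x → Crosses ε g x → Crosses ε e x ∨ Crosses ε f x) : g ∈ R := by
  by_contra hgR
  obtain ⟨x, hx, hgx⟩ := h₁.exists_crosses g hg (Set.mem_insert_iff.not.2 (not_or.2 ⟨hge, hgR⟩))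
  have hxR : x ∈ R := hx.resolve_left fun hxe => hnc (hxe ▸ hgx)
  exact (h x (h₁.valid x hx) hgx).elim (h₁.not_crosses e (R.mem_insert e) x hx)
    (h₂.not_crosses f (R.mem_insert f) x (Set.mem_insert_of_mem f hxR))

theorem left_right_mem_of_flip (h₁ : IsMaxNoncrossing n ε (insert e R))
    (h₂ : IsMaxNoncrossing n ε (insert f R)) (h : CrossUp ε e f) :
    (e.1, f.2) ∈ R ∧ ValidPair n (e.1, f.2) := by
  have hlt : e.1 < f.2 := by have := h.1; omega
  have hvalid : ValidPair n (e.1, f.2) := ⟨hlt, (h₂.valid f (R.mem_insert f)).2⟩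
  exact ⟨mem_of_flip h₁ h₂ hvalid (ne_of_apply_ne Prod.snd h.2.2.ne.symm)
    (fun hc => hc.left_ne rfl) fun x hx => h.crosses_of_crosses_left_right hx.1, hvalid⟩

theorem right_left_mem_of_flip (h₁ : IsMaxNoncrossing n ε (insert e R))
    (h₂ : IsMaxNoncrossing n ε (insert f R)) (h : CrossUp ε e f) :
    (f.1, e.2) ∈ R ∧ ValidPair n (f.1, e.2) := by
  have hlt : f.1 < e.2 := by have := h.1; omega
  have hvalid : ValidPair n (f.1, e.2) := ⟨hlt, (h₁.valid e (R.mem_insert e)).2⟩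
  exact ⟨mem_of_flip h₁ h₂ hvalid (ne_of_apply_ne Prod.fst h.2.1.ne)
    (fun hc => hc.right_ne rfl) fun x hx => h.crosses_of_crosses_right_left hx.1, hvalid⟩

end

/-- `T'` arises from `T` by replacing one segment by a steeper one crossing it: the common
combinatorial form of `TriCovers` and `MarCovers`. -/
def IsUpFlip (ε : ℕ → Bool) (T T' : Finset (ℕ × ℕ)) : Prop :=
  ∃ e f R, e ∉ R ∧ f ∉ R ∧ T = insert e R ∧ T' = insert f R ∧ CrossUp ε e f

theorem triCovers_iff_isUpFlip {p : ℕ → ℂ} (hp : PolyPts n ε p) {T T' : Finset (ℕ × ℕ)}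
    (hT : IsMaxNoncrossing n ε T) (hT' : IsMaxNoncrossing n ε T') :
    TriCovers n ε p T T' ↔ IsUpFlip ε T T' := by
  constructor
  · rintro ⟨e, f, hef, -, -, he, hf, hR, hslope⟩
    have hTe : T = insert e (T.erase e) := (Finset.insert_erase he).symm
    have hTf : T' = insert f (T.erase e) := hR ▸ (Finset.insert_erase hf).symm
    have hfR : f ∉ T.erase e := hR ▸ Finset.notMem_erase f T'
    refine ⟨e, f, T.erase e, Finset.notMem_erase e T, hfR, hTe, hTf, ?_⟩
    have hc : Crosses ε e f :=
      crosses_of_flip (R := ↑(T.erase e)) (Finset.coe_insert e _ ▸ hTe ▸ hT)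
      (Finset.coe_insert f _ ▸ hTf ▸ hT') hef hfR
    exact hc.resolve_right fun hfe =>
      hslope.asymm (hp.slope_lt_of_crossUp (hT'.valid f hf) (hT.valid e he) hfe)
  · rintro ⟨e, f, R, he, hf, rfl, rfl, hc⟩
    have hev : ValidPair n e := hT.valid e (Finset.mem_insert_self e R)
    have hfv : ValidPair n f := hT'.valid f (Finset.mem_insert_self f R)
    exact ⟨e, f, ne_of_apply_ne Prod.snd hc.2.2.ne, Crosses.diagonal (Or.inl hc) hev hfv.2,
      Crosses.diagonal (Or.inr hc) hfv hev.2, Finset.mem_insert_self e R,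
      Finset.mem_insert_self f R, by rw [Finset.erase_insert he, Finset.erase_insert hf],
      hp.slope_lt_of_crossUp hev hfv hc⟩

section

variable {e f : ℕ × ℕ}

theorem FRep_insert_iso {R : Finset (ℕ × ℕ)} (he : e ∉ R) :
    (FRep k n ε (insert e R)).Iso ((ofSeg k n ε e).dsum (FRep k n ε R)) :=
  sumOfSegs_iso_of_perm (Finset.toList_insert he)

theorem eq_insert_of_FRep_iso {T : Finset (ℕ × ℕ)} {L : List (ℕ × ℕ)}
    (hT : ∀ f ∈ T, ValidPair n f) (he : ValidPair n e) (hL : ∀ f ∈ L, ValidPair n f)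
    (h : (FRep k n ε T).Iso ((ofSeg k n ε e).dsum (sumOfSegs k n ε L))) :
    e ∉ L.toFinset ∧ T = insert e L.toFinset := by
  have hperm : T.toList.Perm (e :: L) := perm_of_sumOfSegs_iso (k := k) (ε := ε)
    (by simpa using hT) (List.forall_mem_cons.2 ⟨he, hL⟩) h
  have hnodup := hperm.nodup_iff.1 T.nodup_toList
  exact ⟨by simpa using (List.nodup_cons.1 hnodup).1,
    by simpa using List.toFinset_eq_of_perm _ _ hperm⟩

theorem hasExt_of_not_splits {A B : ARep k n ε} (he : e.2 ≤ n + 2) (hf : f.2 ≤ n + 2)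
    (hB : B.Iso (ofSeg k n ε e)) (hA : A.Iso (ofSeg k n ε f)) {σ : SES B A} (hσ : ¬σ.Splits) :
    HasExt ε e f := by
  by_contra h
  exact hσ ((extZero_of_not_hasExt he hf h).of_iso hA.symm hB.symm σ)

theorem HasExt.crossUp (h : HasExt ε e f) (hc : Crosses ε e f) : CrossUp ε e f :=
  hc.resolve_right fun hfe => h.2.1.asymm hfe.2.1

theorem IsUpFlip.marCovers {T T' : Finset (ℕ × ℕ)} (hT : IsMaxNoncrossing n ε T)
    (hT' : IsMaxNoncrossing n ε T') (h : IsUpFlip ε T T') :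
    MarCovers (FRep k n ε T) (FRep k n ε T') := by
  obtain ⟨e, f, R, he, hf, rfl, rfl, hc⟩ := h
  have hRv : ∀ g ∈ R.toList, ValidPair n g := fun g hg =>
    hT.valid g (Finset.mem_insert_of_mem (Finset.mem_toList.1 hg))
  rw [Finset.coe_insert] at hT hT'
  have hev : ValidPair n e := hT.valid e (Set.mem_insert e _)
  have hfv : ValidPair n f := hT'.valid f (Set.mem_insert f _)
  obtain ⟨hlr, hlrv⟩ := left_right_mem_of_flip hT hT' hc
  obtain ⟨hrl, hrlv⟩ := right_left_mem_of_flip hT hT' hc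
  obtain ⟨σ, hσ, hE⟩ := HasExt.exists_ses (k := k) hev hfv.2 ⟨hc.1.le, hc.2⟩
  exact ⟨_, _, FRep k n ε R, ofSeg_indec hev, ofSeg_indec hfv, FRep_insert_iso he,
    FRep_insert_iso hf, σ, hσ, _, _, ofSeg_indec hlrv, ofSeg_indec hrlv,
    (ofSeg_isSummand_iff hlrv hRv).2 (Finset.mem_toList.2 hlr),
    (ofSeg_isSummand_iff hrlv hRv).2 (Finset.mem_toList.2 hrl), hE ▸ .refl _⟩

theorem MarCovers.isUpFlip {T T' : Finset (ℕ × ℕ)} (hT : IsMaxNoncrossing n ε T)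
    (hT' : IsMaxNoncrossing n ε T') (h : MarCovers (FRep k n ε T) (FRep k n ε T')) :
    IsUpFlip ε T T' := by
  obtain ⟨M, N, C, hM, hN, hTM, hTN, σ, hσ, -⟩ := h
  obtain ⟨e, he, hMe⟩ := Indec.exists_iso_ofSeg hM
  obtain ⟨f, hf, hNf⟩ := Indec.exists_iso_ofSeg hN
  obtain ⟨L, hL, hCL⟩ := exists_iso_sumOfSegs C
  obtain ⟨heL, rfl⟩ := eq_insert_of_FRep_iso hT.valid he hL (hTM.trans (hMe.dsum hCL))
  obtain ⟨hfL, rfl⟩ := eq_insert_of_FRep_iso hT'.valid hf hL (hTN.trans (hNf.dsum hCL))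
  have hext : HasExt ε e f := hasExt_of_not_splits he.2 hf.2 hMe hNf hσ
  rw [Finset.coe_insert] at hT hT'
  exact ⟨e, f, L.toFinset, heL, hfL, rfl, rfl, hext.crossUp
    (crosses_of_flip hT hT' (ne_of_apply_ne Prod.snd hext.2.2.ne) (Finset.mem_coe.not.2 hfL))⟩

end

section

variable {p : ℕ → ℂ}

theorem triCovers_iff_marCovers (hp : PolyPts n ε p) {T T' : Finset (ℕ × ℕ)}
    (hT : IsTriangulation n p T) (hT' : IsTriangulation n p T') :
    TriCovers n ε p T T' ↔ MarCovers (FRep k n ε T) (FRep k n ε T') := by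
  rw [isTriangulation_iff hp] at hT hT'
  exact (triCovers_iff_isUpFlip hp hT hT').trans
    ⟨IsUpFlip.marCovers hT hT', MarCovers.isUpFlip hT hT'⟩

theorem exists_triangulation_chain (hp : PolyPts n ε p) {T : Finset (ℕ × ℕ)}
    (hT : IsTriangulation n p T) {Y : ARep k n ε}
    (h : Relation.ReflTransGen
      (fun X Y : ARep k n ε => MaxAlmostRigid X ∧ MaxAlmostRigid Y ∧ MarCovers X Y)
      (FRep k n ε T) Y) :
    ∃ T', IsTriangulation n p T' ∧ Y.Iso (FRep k n ε T') ∧ Relation.ReflTransGen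
      (fun A B => IsTriangulation n p A ∧ IsTriangulation n p B ∧ TriCovers n ε p A B) T T' := by
  induction h with
  | refl => exact ⟨T, hT, .refl _, .refl⟩
  | tail _ hYZ ih =>
    obtain ⟨U, hU, hYU, hchain⟩ := ih
    obtain ⟨-, hZ, hcov⟩ := hYZ
    obtain ⟨V, hV, hZV⟩ := hZ.exists_isTriangulation hp
    exact ⟨V, hV, hZV, hchain.tail
      ⟨hU, hV, (triCovers_iff_marCovers hp hU hV).2 (hcov.of_iso hYU hZV)⟩⟩

end

/-- `F` preserves and reflects covering relations, and therefore induces a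
poset isomorphism from the type `A` Cambrian lattice on triangulations of `P(Q)` onto
the poset of (isomorphism classes of) maximal almost rigid representations of `Q`. -/
theorem stmt_15 (k : Type) [Field k] (n : ℕ) (ε : ℕ → Bool) (p : ℕ → ℂ)
    (hp : PolyPts n ε p) :
    (∀ T1 T2 : Finset (ℕ × ℕ), IsTriangulation n p T1 → IsTriangulation n p T2 →
      (TriCovers n ε p T1 T2 ↔ MarCovers (FRep k n ε T1) (FRep k n ε T2))) ∧
    (∀ T1 T2 : Finset (ℕ × ℕ), IsTriangulation n p T1 → IsTriangulation n p T2 →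
      (Relation.ReflTransGen
          (fun A B => IsTriangulation n p A ∧ IsTriangulation n p B ∧ TriCovers n ε p A B)
          T1 T2 ↔
        Relation.ReflTransGen
          (fun X Y : ARep k n ε => MaxAlmostRigid X ∧ MaxAlmostRigid Y ∧ MarCovers X Y)
          (FRep k n ε T1) (FRep k n ε T2))) := by
  refine ⟨fun T1 T2 h1 h2 => triCovers_iff_marCovers hp h1 h2,
    fun T1 T2 h1 h2 => ⟨fun h => ?_, fun h => ?_⟩⟩
  · exact h.lift (FRep k n ε) fun A B ⟨hA, hB, hAB⟩ =>
      ⟨maxAlmostRigid_FRep hp hA, maxAlmostRigid_FRep hp hB,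
        (triCovers_iff_marCovers hp hA hB).1 hAB⟩
  · obtain ⟨T, hT, hiso, hchain⟩ := exists_triangulation_chain hp h1 h
    rwa [eq_of_FRep_iso h2.1 hT.1 hiso]

end CambrianA
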